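/- arXiv:1504.01225 — 3 statements merged into one kernel-verified Lean document; each statement's English description precedes it below -/
import Mathlib

section
/- For every formal weight x = cβ + n (c, n ∈ ℤ) and every k ∈ ℕ: ∑_{ℓ=0}^{k} (−q)^ℓ·[x−ℓ choose k]·[k choose ℓ] = q^{−kx + k²}, where q^{−kx+k²} = Q^{−kc}·q^{−kn+k²}. -/
noncomputable section

variable {F : Type*}

/-- `q^x` for the formal weight `x = c·β + n`, where `Q` plays the role of `q^β`. -/
def qpow [Field F] (q Q : F) (c n : ℤ) : F := Q ^ c * q ^ n

/-- The quantum number `[x]` for the formal weight `x = c·β + n`. -/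
def qnum [Field F] (q Q : F) (c n : ℤ) : F :=
  (qpow q Q c n - qpow q Q (-c) (-n)) / (q - q⁻¹)

/-- The quantum binomial `[x choose k]` for the formal weight `x = c·β + n`. -/
def qbinom [Field F] (q Q : F) (c n : ℤ) (k : ℕ) : F :=
  (∏ i ∈ Finset.range k, qnum q Q c (n - (i : ℤ))) /
    ∏ i ∈ Finset.range k, qnum q Q 0 ((i : ℤ) + 1)

/-!
The sum is an iterated `q`-difference. Splitting `[x] = q^(m+1) [x-m-1] + q^(m+1-x) [m+1]` gives
`[x choose m+1] - q^(m+1) [x-1 choose m+1] = q^(m+1-x) [x-1 choose m]`, so one difference lowers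
the degree of the binomial by one. Pascal's rule for `[k+1 choose ℓ]` writes the sum for `k + 1` as
the sum for `k` of such differences, and `k` of them turn `[x choose k+j]` into a power of `q` times
`[x-k choose j]`; the theorem is the case `j = 0`.
-/

theorem neg_pow_succ_pow {M : Type*} [CommMonoid M] [HasDistribNeg M] (x : M) (j l : ℕ) :
    (-x ^ (j + 1)) ^ l = x ^ l * (-x ^ j) ^ l := by
  rw [← mul_pow, mul_neg, ← pow_succ']

section QuantumBinomial

variable [Field F] {q Q : F}

theorem qpow_add (hq : q ≠ 0) (hQ : Q ≠ 0) (c d n m : ℤ) :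
    qpow q Q (c + d) (n + m) = qpow q Q c n * qpow q Q d m := by
  rw [qpow, qpow, qpow, zpow_add₀ hQ, zpow_add₀ hq, mul_mul_mul_comm]

theorem qpow_zero_left (q Q : F) (n : ℤ) : qpow q Q 0 n = q ^ n := by
  rw [qpow, zpow_zero, one_mul]

theorem qnum_add (hq : q ≠ 0) (hQ : Q ≠ 0) (c d n m : ℤ) :
    qnum q Q (c + d) (n + m) =
      qpow q Q d m * qnum q Q c n + qpow q Q (-c) (-n) * qnum q Q d m := by
  simp only [qnum, neg_add, qpow_add hq hQ]
  ring

theorem qnum_zero_zero (q Q : F) : qnum q Q 0 0 = 0 := by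
  rw [qnum, neg_zero, sub_self, zero_div]

theorem sub_inv_ne_zero_of_sq_ne_one {x : F} (hx : x ≠ 0) (h : x ^ 2 ≠ 1) : x - x⁻¹ ≠ 0 :=
  sub_ne_zero.2 fun hinv => h (by rw [sq, (mul_eq_one_iff_eq_inv₀ hx).2 hinv])

theorem qnum_zero_left_ne_zero (Q : F) (hq : q ≠ 0) (hq₂ : q ^ 2 ≠ 1) {n : ℤ}
    (hn : (q ^ n) ^ 2 ≠ 1) : qnum q Q 0 n ≠ 0 := by
  rw [qnum, neg_zero, qpow_zero_left, qpow_zero_left, zpow_neg]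
  exact div_ne_zero (sub_inv_ne_zero_of_sq_ne_one (zpow_ne_zero n hq) hn)
    (sub_inv_ne_zero_of_sq_ne_one hq hq₂)

theorem qnum_natCast_add_one_ne_zero (Q : F) (hq : q ≠ 0)
    (hroot : ∀ k : ℕ, k ≠ 0 → q ^ k ≠ 1) (i : ℕ) : qnum q Q 0 ((i : ℤ) + 1) ≠ 0 := by
  refine qnum_zero_left_ne_zero Q hq (hroot 2 two_ne_zero) ?_
  have hpow : (q ^ (i + 1)) ^ 2 ≠ 1 := by
    rw [← pow_mul]
    exact hroot _ (by positivity)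
  exact_mod_cast hpow

theorem qbinom_zero_right (q Q : F) (c n : ℤ) : qbinom q Q c n 0 = 1 := by
  simp [qbinom]

theorem qbinom_succ_right (q Q : F) (c n : ℤ) (k : ℕ) :
    qbinom q Q c n (k + 1) =
      qbinom q Q c n k * (qnum q Q c (n - k) / qnum q Q 0 ((k : ℤ) + 1)) := by
  rw [qbinom, qbinom, Finset.prod_range_succ, Finset.prod_range_succ, mul_div_mul_comm]

theorem qbinom_succ_right' (q Q : F) (c n : ℤ) (k : ℕ) :
    qbinom q Q c n (k + 1) =
      qbinom q Q c (n - 1) k * (qnum q Q c n / qnum q Q 0 ((k : ℤ) + 1)) := by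
  have hshift (i : ℕ) : n - ((i + 1 : ℕ) : ℤ) = n - 1 - i := by push_cast; ring
  rw [qbinom, qbinom, Finset.prod_range_succ', Finset.prod_range_succ, mul_div_mul_comm]
  simp only [hshift, Nat.cast_zero, sub_zero]

theorem qbinom_natCast_succ_self (q Q : F) (k : ℕ) : qbinom q Q 0 (k : ℤ) (k + 1) = 0 := by
  rw [qbinom_succ_right, sub_self, qnum_zero_zero, zero_div, mul_zero]

theorem qbinom_succ_of_qnum_eq {c n : ℤ} {k : ℕ} {a b : F}
    (hk : qnum q Q 0 ((k : ℤ) + 1) ≠ 0)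
    (h : qnum q Q c n = a * qnum q Q c (n - 1 - k) + b * qnum q Q 0 ((k : ℤ) + 1)) :
    qbinom q Q c n (k + 1) =
      a * qbinom q Q c (n - 1) (k + 1) + b * qbinom q Q c (n - 1) k := by
  rw [qbinom_succ_right', qbinom_succ_right q Q c (n - 1), h]
  field_simp

theorem qbinom_pascal (hq : q ≠ 0) (hQ : Q ≠ 0) (c n : ℤ) {k : ℕ}
    (hk : qnum q Q 0 ((k : ℤ) + 1) ≠ 0) :
    qbinom q Q c n (k + 1) =
      q ^ (k + 1) * qbinom q Q c (n - 1) (k + 1) +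
        qpow q Q (-c) (k + 1 - n) * qbinom q Q c (n - 1) k := by
  refine qbinom_succ_of_qnum_eq hk ?_
  have hn : n - 1 - k + ((k : ℤ) + 1) = n := by ring
  have hneg : -(n - 1 - k) = (k : ℤ) + 1 - n := by ring
  have hpow : qpow q Q 0 ((k : ℤ) + 1) = q ^ (k + 1) := by
    rw [qpow_zero_left]
    norm_cast
  simpa only [add_zero, hn, hneg, hpow] using qnum_add hq hQ c 0 (n - 1 - k) (k + 1)

theorem qbinom_pascal' (hq : q ≠ 0) (hQ : Q ≠ 0) (c n : ℤ) {k : ℕ}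
    (hk : qnum q Q 0 ((k : ℤ) + 1) ≠ 0) :
    qbinom q Q c n (k + 1) =
      (q ^ (k + 1))⁻¹ * qbinom q Q c (n - 1) (k + 1) +
        qpow q Q c (n - 1 - k) * qbinom q Q c (n - 1) k := by
  refine qbinom_succ_of_qnum_eq hk ?_
  have hn : (k : ℤ) + 1 + (n - 1 - k) = n := by ring
  have hpow : qpow q Q 0 (-((k : ℤ) + 1)) = (q ^ (k + 1))⁻¹ := by
    rw [qpow_zero_left, zpow_neg]
    norm_cast
  have hadd := qnum_add hq hQ 0 c (k + 1) (n - 1 - k)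
  rw [zero_add, hn, neg_zero, hpow] at hadd
  rw [hadd, add_comm]

theorem pow_mul_qbinom_natCast_succ (hq : q ≠ 0) (hQ : Q ≠ 0) (k : ℕ) {l : ℕ}
    (hl : qnum q Q 0 ((l : ℤ) + 1) ≠ 0) :
    q ^ (l + 1) * qbinom q Q 0 ((k + 1 : ℕ) : ℤ) (l + 1) =
      qbinom q Q 0 (k : ℤ) (l + 1) + q ^ (k + 1) * qbinom q Q 0 (k : ℤ) l := by
  have hk : ((k + 1 : ℕ) : ℤ) - 1 = k := by push_cast; ring
  have hpow : q ^ (l + 1) * qpow q Q 0 ((k : ℤ) - l) = q ^ (k + 1) := by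
    rw [qpow_zero_left, ← zpow_natCast, ← zpow_natCast, ← zpow_add₀ hq]
    congr 1
    push_cast
    ring
  rw [qbinom_pascal' hq hQ _ _ hl, hk, mul_add, mul_inv_cancel_left₀ (pow_ne_zero _ hq),
    ← mul_assoc, hpow]

theorem sum_pow_mul_qbinom_natCast_succ (hq : q ≠ 0) (hQ : Q ≠ 0) {k : ℕ}
    (hk : ∀ i < k + 1, qnum q Q 0 ((i : ℤ) + 1) ≠ 0) (f : ℕ → F) :
    ∑ l ∈ Finset.range (k + 2), q ^ l * f l * qbinom q Q 0 ((k + 1 : ℕ) : ℤ) l =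
      ∑ l ∈ Finset.range (k + 1), (f l + q ^ (k + 1) * f (l + 1)) * qbinom q Q 0 (k : ℤ) l := by
  have hsucc : ∀ l ∈ Finset.range (k + 1),
      q ^ (l + 1) * f (l + 1) * qbinom q Q 0 ((k + 1 : ℕ) : ℤ) (l + 1) =
        f (l + 1) * qbinom q Q 0 (k : ℤ) (l + 1) +
          q ^ (k + 1) * f (l + 1) * qbinom q Q 0 (k : ℤ) l := fun l hl => by
    rw [mul_right_comm, pow_mul_qbinom_natCast_succ hq hQ k (hk l (Finset.mem_range.1 hl))]
    ring
  have hshift : ∑ l ∈ Finset.range (k + 1), f (l + 1) * qbinom q Q 0 (k : ℤ) (l + 1) + f 0 =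
      ∑ l ∈ Finset.range (k + 1), f l * qbinom q Q 0 (k : ℤ) l := by
    have h := Finset.sum_range_succ' (fun l => f l * qbinom q Q 0 (k : ℤ) l) (k + 1)
    rw [Finset.sum_range_succ, qbinom_natCast_succ_self, qbinom_zero_right, mul_zero, add_zero,
      mul_one] at h
    exact h.symm
  calc ∑ l ∈ Finset.range (k + 2), q ^ l * f l * qbinom q Q 0 ((k + 1 : ℕ) : ℤ) l
      = ∑ l ∈ Finset.range (k + 1), f (l + 1) * qbinom q Q 0 (k : ℤ) (l + 1) + f 0 +
          ∑ l ∈ Finset.range (k + 1), q ^ (k + 1) * f (l + 1) * qbinom q Q 0 (k : ℤ) l := by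
        rw [Finset.sum_range_succ', Finset.sum_congr rfl hsucc, Finset.sum_add_distrib,
          qbinom_zero_right, pow_zero, one_mul, mul_one, add_right_comm]
    _ = _ := by
        rw [hshift, ← Finset.sum_add_distrib]
        simp only [add_mul]

theorem neg_pow_mul_qbinom_add_pow_mul (hq : q ≠ 0) (hQ : Q ≠ 0) (c n : ℤ) {k j : ℕ}
    (hkj : qnum q Q 0 (((k + j : ℕ) : ℤ) + 1) ≠ 0) (l : ℕ) :
    (-q ^ j) ^ l * qbinom q Q c (n - l) (k + j + 1) +
        q ^ (k + 1) * ((-q ^ j) ^ (l + 1) * qbinom q Q c (n - (l + 1 : ℕ)) (k + j + 1)) =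
      qpow q Q (-c) (k + j + 1 - n) *
        ((-q ^ (j + 1)) ^ l * qbinom q Q c (n - 1 - l) (k + j)) := by
  have hn : n - ((l + 1 : ℕ) : ℤ) = n - l - 1 := by push_cast; ring
  have hweight : qpow q Q (-c) (((k + j : ℕ) : ℤ) + 1 - (n - l)) =
      qpow q Q (-c) (k + j + 1 - n) * q ^ l := by
    rw [← zpow_natCast, ← qpow_zero_left q Q, ← qpow_add hq hQ, add_zero]
    congr 1
    push_cast
    ring
  have hpascal := qbinom_pascal hq hQ c (n - l) hkj
  rw [hweight] at hpascal
  rw [hn, neg_pow_succ_pow, sub_right_comm n 1]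
  linear_combination (-q ^ j) ^ l * hpascal

end QuantumBinomial

theorem stmt4_general [Field F] (q Q : F) (hq : q ≠ 0) (hQ : Q ≠ 0) (c n : ℤ) (k j : ℕ)
    (hk : ∀ i < k + j, qnum q Q 0 ((i : ℤ) + 1) ≠ 0) :
    ∑ l ∈ Finset.range (k + 1),
        (-q ^ (j + 1)) ^ l * qbinom q Q c (n - (l : ℤ)) (k + j) * qbinom q Q 0 (k : ℤ) l =
      qpow q Q (-(k : ℤ) * c) (-(k : ℤ) * n + (k : ℤ) ^ 2 + k * j) *
        qbinom q Q c (n - k) j := by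
  induction k generalizing n with
  | zero => simp [qbinom_zero_right, qpow]
  | succ k ih =>
    rw [add_right_comm k 1 j] at hk ⊢
    calc
      _ = ∑ l ∈ Finset.range (k + 2), q ^ l * ((-q ^ j) ^ l * qbinom q Q c (n - l) (k + j + 1)) *
            qbinom q Q 0 ((k + 1 : ℕ) : ℤ) l := by
        simp only [neg_pow_succ_pow, mul_assoc]
      _ = ∑ l ∈ Finset.range (k + 1), qpow q Q (-c) (k + j + 1 - n) *
            ((-q ^ (j + 1)) ^ l * qbinom q Q c (n - 1 - l) (k + j)) * qbinom q Q 0 (k : ℤ) l := by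
        rw [sum_pow_mul_qbinom_natCast_succ hq hQ (fun i hi => hk i (by omega))
          (fun l => (-q ^ j) ^ l * qbinom q Q c (n - l) (k + j + 1))]
        simp only [neg_pow_mul_qbinom_add_pow_mul hq hQ c n (hk (k + j) (Nat.lt_succ_self _))]
      _ = qpow q Q (-c) (k + j + 1 - n) *
            (qpow q Q (-k * c) (-k * (n - 1) + k ^ 2 + k * j) * qbinom q Q c (n - 1 - k) j) := by
        rw [← ih (n - 1) fun i hi => hk i (by omega), Finset.mul_sum]
        simp only [mul_assoc]
      _ = _ := by
        rw [← mul_assoc, ← qpow_add hq hQ]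
        congr 2 <;> push_cast <;> ring

/-- Equation (2.7): `∑_{ℓ=0}^{k} (−q)^ℓ·[x−ℓ choose k]·[k choose ℓ] = q^{−kx + k²}` for a
formal weight `x = c·β + n` and `k ∈ ℕ`. -/
theorem stmt4 [Field F] (q Q : F) (hq : q ≠ 0) (hQ : Q ≠ 0)
    (hroot : ∀ k : ℕ, k ≠ 0 → q ^ k ≠ 1) (c n : ℤ) (k : ℕ) :
    ∑ l ∈ Finset.range (k + 1),
        (-q) ^ l * qbinom q Q c (n - (l : ℤ)) k * qbinom q Q 0 (k : ℤ) l =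
      qpow q Q (-(k : ℤ) * c) (-(k : ℤ) * n + (k : ℤ) ^ 2) := by
  simpa [qbinom_zero_right] using
    stmt4_general q Q hq hQ c n k 0 fun i _ => qnum_natCast_add_one_ne_zero Q hq hroot i
end
end

section
/- The operator 𝓡 satisfies the braid relation on (V₁⊗V₂) ⊗ (V₁⊗V₂) ⊗ (V₁⊗V₂): (𝓡 ⊗ id) ∘ (id ⊗ 𝓡) ∘ (𝓡 ⊗ id) = (id ⊗ 𝓡) ∘ (𝓡 ⊗ id) ∘ (id ⊗ 𝓡). -/
noncomputable section

/-- The matrix (in the standard basis of `W ⊗ W`, `W` having basis `u_1, …, u_N` indexed by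
`Fin N` with parity `0` for the first `t` indices and `1` for the rest) of the braiding `Ř`
of the vector representation of `U_q(gl(t|N−t))`. -/
def Rmat (F : Type*) [Field F] (q : F) (t N : ℕ) :
    Matrix (Fin N × Fin N) (Fin N × Fin N) F :=
  Matrix.of fun out inp =>
    if inp.1 = inp.2 then
      (if (inp.1 : ℕ) < t then q⁻¹ else -q) * (if out = inp then 1 else 0)
    else
      (if t ≤ (inp.1 : ℕ) ∧ t ≤ (inp.2 : ℕ) then (-1 : F) else 1) *
          (if out = (inp.2, inp.1) then 1 else 0) +
        (if inp.2 < inp.1 then (q⁻¹ - q) * (if out = inp then 1 else 0) else 0)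

/-- The sign `(−1)^{|a|·|b|}` for an index `a` of `V₁` (parity `1` iff `m ≤ a`) and an
index `b` of `V₂` (parity `1` iff `k ≤ b`). -/
def sgn12 (F : Type*) [Field F] (m k : ℕ) {N₁ N₂ : ℕ} (a : Fin N₁) (b : Fin N₂) : F :=
  if m ≤ (a : ℕ) ∧ k ≤ (b : ℕ) then -1 else 1

/-- The matrix of the operator `𝓡 = σ₂₃ ∘ (Ř₁ ⊗ Ř₂) ∘ σ₂₃⁻¹` on `(V₁⊗V₂) ⊗ (V₁⊗V₂)`,
where `V₁ = ℂ_q^{m|n}` has dimension `N₁ = m+n`, `V₂ = ℂ_q^{k|l}` has dimension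
`N₂ = k+l`, and `σ₂₃(x_a ⊗ x_{a'} ⊗ y_b ⊗ y_{b'}) = (−1)^{|a'||b|}·x_a ⊗ y_b ⊗ x_{a'} ⊗
y_{b'}` is the superpermutation of the middle factors.  Basis vectors of
`(V₁⊗V₂) ⊗ (V₁⊗V₂)` are indexed by `((a,b),(a',b'))`. -/
def Rcal (F : Type*) [Field F] (q : F) (m N₁ k N₂ : ℕ) :
    Matrix ((Fin N₁ × Fin N₂) × (Fin N₁ × Fin N₂)) ((Fin N₁ × Fin N₂) × (Fin N₁ × Fin N₂))
      F :=
  Matrix.of fun out inp =>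
    sgn12 F m k inp.2.1 inp.1.2 * sgn12 F m k out.2.1 out.1.2 *
      (Rmat F q m N₁ (out.1.1, out.2.1) (inp.1.1, inp.2.1) *
        Rmat F q k N₂ (out.1.2, out.2.2) (inp.1.2, inp.2.2))

/-- The matrix of `𝓡 ⊗ id` on `(V₁⊗V₂) ⊗ (V₁⊗V₂) ⊗ (V₁⊗V₂)`. -/
def Rcal12 (F : Type*) [Field F] (q : F) (m N₁ k N₂ : ℕ) :
    Matrix ((Fin N₁ × Fin N₂) × (Fin N₁ × Fin N₂) × (Fin N₁ × Fin N₂))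
      ((Fin N₁ × Fin N₂) × (Fin N₁ × Fin N₂) × (Fin N₁ × Fin N₂)) F :=
  Matrix.of fun out inp =>
    Rcal F q m N₁ k N₂ (out.1, out.2.1) (inp.1, inp.2.1) *
      (if out.2.2 = inp.2.2 then 1 else 0)

/-- The matrix of `id ⊗ 𝓡` on `(V₁⊗V₂) ⊗ (V₁⊗V₂) ⊗ (V₁⊗V₂)`. -/
def Rcal23 (F : Type*) [Field F] (q : F) (m N₁ k N₂ : ℕ) :
    Matrix ((Fin N₁ × Fin N₂) × (Fin N₁ × Fin N₂) × (Fin N₁ × Fin N₂))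
      ((Fin N₁ × Fin N₂) × (Fin N₁ × Fin N₂) × (Fin N₁ × Fin N₂)) F :=
  Matrix.of fun out inp =>
    (if out.1 = inp.1 then 1 else 0) *
      Rcal F q m N₁ k N₂ (out.2.1, out.2.2) (inp.2.1, inp.2.2)

/-!
An operator on `V ⊗ V` sending `u_a ⊗ u_b` to `σ a b • u_b ⊗ u_a + β a b • u_a ⊗ u_b` satisfies the
braid relation as soon as three identities between the scalars `σ` and `β` hold. For `Ř` these
follow from its quadratic (Hecke) relation and from `β a b` being constant for `a > b` and zero for
`a < b`. Such operators preserve the multiset of indices of a basis vector. So the sign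
`(−1)^{|a'||b|}` of `σ₂₃` extends to a sign on triple tensors, the product of `(−1)^{|a_j||b_i|}`
over `i < j`, which conjugates `Ř₁ ⊗ Ř₂`, acting on two adjacent legs, to `𝓡` acting on the same
legs: the sign contributed by the idle leg is constant. The braid relation for `𝓡` is then the
product of those for `Ř₁` and `Ř₂`.
-/

section TensorSquare

open scoped Kronecker Matrix

variable {K ι ι₁ ι₂ : Type*} [CommRing K]

section BraidRelation

variable [DecidableEq ι]

/-- The matrix of `M ⊗ id` on the triple tensor power, indexed by right-nested triples. -/
def leg12 (M : Matrix (ι × ι) (ι × ι) K) : Matrix (ι × ι × ι) (ι × ι × ι) K :=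
  Matrix.reindex (Equiv.prodAssoc ι ι ι) (Equiv.prodAssoc ι ι ι) (M ⊗ₖ (1 : Matrix ι ι K))

/-- The matrix of `id ⊗ M` on the triple tensor power, indexed by right-nested triples. -/
def leg23 (M : Matrix (ι × ι) (ι × ι) K) : Matrix (ι × ι × ι) (ι × ι × ι) K :=
  (1 : Matrix ι ι K) ⊗ₖ M

theorem leg12_apply (M : Matrix (ι × ι) (ι × ι) K) (a b c a' b' c' : ι) :
    leg12 M (a, b, c) (a', b', c') = M (a, b) (a', b') * (1 : Matrix ι ι K) c c' :=
  rfl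

theorem leg23_apply (M : Matrix (ι × ι) (ι × ι) K) (a b c a' b' c' : ι) :
    leg23 M (a, b, c) (a', b', c') = (1 : Matrix ι ι K) a a' * M (b, c) (b', c') :=
  rfl

/-- The braid relation for the operator on a tensor square with matrix `M`. -/
def IsBraiding [Fintype ι] (M : Matrix (ι × ι) (ι × ι) K) : Prop :=
  leg12 M * leg23 M * leg12 M = leg23 M * leg12 M * leg23 M

end BraidRelation

section SixVertex

/-- The ice rule of the six-vertex model: `M` maps each `u_a ⊗ u_b` into the span of `u_a ⊗ u_b`
and `u_b ⊗ u_a`. -/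
def IceRule (M : Matrix (ι × ι) (ι × ι) K) : Prop :=
  ∀ ⦃a b a' b'⦄, M (a, b) (a', b') ≠ 0 → s(a, b) = s(a', b')

theorem IceRule.mul_eq_mul {M : Matrix (ι × ι) (ι × ι) K} (hM : IceRule M) (f : ι → K)
    {a b a' b' : ι} (h : M (a, b) (a', b') ≠ 0) : f a * f b = f a' * f b' := by
  obtain ⟨rfl, rfl⟩ | ⟨rfl, rfl⟩ := Sym2.eq_iff.mp (hM h)
  · rfl
  · exact mul_comm _ _

variable [DecidableEq ι]

/-- The matrix of the operator `u_a ⊗ u_b ↦ σ a b • u_b ⊗ u_a + β a b • u_a ⊗ u_b`. On the diagonal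
only the sum `σ a a + β a a` matters. -/
def sixVertexMatrix (σ β : ι → ι → K) : Matrix (ι × ι) (ι × ι) K :=
  Matrix.of fun out inp =>
    σ inp.1 inp.2 * (if out = inp.swap then 1 else 0) + β inp.1 inp.2 * (if out = inp then 1 else 0)

theorem iceRule_sixVertexMatrix (σ β : ι → ι → K) : IceRule (sixVertexMatrix σ β) := by
  intro a b a' b' h
  contrapose! h
  obtain ⟨h_id, h_swap⟩ := not_or.mp (Sym2.eq_iff.not.mp h)
  simp [sixVertexMatrix, h_id, h_swap]

variable [Fintype ι]

theorem leg12_sixVertexMatrix_mulVec_single (σ β : ι → ι → K) (a b c : ι) :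
    leg12 (sixVertexMatrix σ β) *ᵥ Pi.single (a, b, c) 1 =
      σ a b • Pi.single (b, a, c) 1 + β a b • Pi.single (a, b, c) 1 := by
  ext ⟨x, y, z⟩
  by_cases h : z = c <;> simp [leg12_apply, sixVertexMatrix, Pi.single_apply, h]

theorem leg23_sixVertexMatrix_mulVec_single (σ β : ι → ι → K) (a b c : ι) :
    leg23 (sixVertexMatrix σ β) *ᵥ Pi.single (a, b, c) 1 =
      σ b c • Pi.single (a, c, b) 1 + β b c • Pi.single (a, b, c) 1 := by
  ext ⟨x, y, z⟩
  by_cases h : x = a <;> simp [leg23_apply, sixVertexMatrix, Pi.single_apply, h]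

/- Both sides of the braid relation send `u_a ⊗ u_b ⊗ u_c` to a combination of its six permutations.
The coefficients of `cba`, `bca` and `cab` agree identically; the hypotheses compare those of
`bac`, `acb` and `abc`. -/
theorem isBraiding_sixVertexMatrix {σ β : ι → ι → K}
    (h_bac : ∀ a b c, σ a b * (β b a * β a c + β a b * β b c) = σ a b * (β a c * β b c))
    (h_acb : ∀ a b c, σ b c * (β a c * β c b + β a b * β b c) = σ b c * (β a b * β a c))
    (h_abc : ∀ a b c, σ a b * σ b a * β a c + β a b ^ 2 * β b c =
      σ b c * σ c b * β a c + β a b * β b c ^ 2) :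
    IsBraiding (sixVertexMatrix σ β) := by
  apply Matrix.ext_of_mulVec_single
  rintro ⟨a, b, c⟩
  simp only [← Matrix.mulVec_mulVec, leg12_sixVertexMatrix_mulVec_single,
    leg23_sixVertexMatrix_mulVec_single, Matrix.mulVec_add, Matrix.mulVec_smul]
  linear_combination (norm := module)
    (h_bac a b c) • (Pi.single (b, a, c) 1 : ι × ι × ι → K) -
    (h_acb a b c) • (Pi.single (a, c, b) 1 : ι × ι × ι → K) +
    (h_abc a b c) • (Pi.single (a, b, c) 1 : ι × ι × ι → K)

end SixVertex

section Hecke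

variable [LinearOrder ι]

/-- Scalars `σ`, `β` for which `R = sixVertexMatrix σ β` is a multiparameter `R`-matrix of type `A`:
it satisfies the Hecke relation `R ^ 2 = r • R + 1` and has no diagonal term on `u_a ⊗ u_b` for
`a < b`. -/
structure IsHeckeWeight (σ β : ι → ι → K) (r : K) : Prop where
  swap_self : ∀ a, σ a a = 0
  swap_mul_swap : ∀ {a b}, a ≠ b → σ a b * σ b a = 1
  diag_of_lt : ∀ {a b}, a < b → β a b = 0
  diag_of_gt : ∀ {a b}, b < a → β a b = r
  diag_self_sq : ∀ a, β a a ^ 2 = r * β a a + 1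

namespace IsHeckeWeight

variable {σ β : ι → ι → K} {r : K}

theorem diag_eq_zero_or_eq (h : IsHeckeWeight σ β r) {a b : ι} (hab : a ≠ b) :
    β a b = 0 ∨ β a b = r :=
  hab.lt_or_gt.imp h.diag_of_lt h.diag_of_gt

theorem diag_quadratic_left (h : IsHeckeWeight σ β r) {a b : ι} (hab : a ≠ b) (c : ι) :
    β b a * β a c + β a b * β b c = β a c * β b c := by
  obtain hab | hba := hab.lt_or_gt
  · rw [h.diag_of_lt hab, h.diag_of_gt hab]
    obtain hcb | hbc := lt_or_ge c b
    · rw [h.diag_of_gt hcb]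
      ring
    · rw [h.diag_of_lt (hab.trans_le hbc)]
      ring
  · rw [h.diag_of_lt hba, h.diag_of_gt hba]
    obtain hca | hac := lt_or_ge c a
    · rw [h.diag_of_gt hca]
      ring
    · rw [h.diag_of_lt (hba.trans_le hac)]
      ring

theorem diag_quadratic_right (h : IsHeckeWeight σ β r) (a : ι) {b c : ι} (hbc : b ≠ c) :
    β a c * β c b + β a b * β b c = β a b * β a c := by
  obtain hbc | hcb := hbc.lt_or_gt
  · rw [h.diag_of_lt hbc, h.diag_of_gt hbc]
    obtain hba | hab := lt_or_ge b a
    · rw [h.diag_of_gt hba]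
      ring
    · rw [h.diag_of_lt (hab.trans_lt hbc)]
      ring
  · rw [h.diag_of_lt hcb, h.diag_of_gt hcb]
    obtain hca | hac := lt_or_ge c a
    · rw [h.diag_of_gt hca]
      ring
    · rw [h.diag_of_lt (hac.trans_lt hcb)]
      ring

theorem diag_cubic (h : IsHeckeWeight σ β r) (a b c : ι) :
    σ a b * σ b a * β a c + β a b ^ 2 * β b c = σ b c * σ c b * β a c + β a b * β b c ^ 2 := by
  obtain rfl | hab := eq_or_ne a b
  · obtain rfl | hac := eq_or_ne a c
    · ring
    · rw [h.swap_self, h.swap_mul_swap hac, h.diag_self_sq]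
      obtain hβ | hβ := h.diag_eq_zero_or_eq hac <;> rw [hβ] <;> ring
  · obtain rfl | hbc := eq_or_ne b c
    · rw [h.swap_self, h.swap_mul_swap hab, h.diag_self_sq]
      obtain hβ | hβ := h.diag_eq_zero_or_eq hab <;> rw [hβ] <;> ring
    · rw [h.swap_mul_swap hab, h.swap_mul_swap hbc]
      obtain hβ | hβ := h.diag_eq_zero_or_eq hab <;>
        obtain hβ' | hβ' := h.diag_eq_zero_or_eq hbc <;> rw [hβ, hβ'] <;> ring

theorem isBraiding [Fintype ι] (h : IsHeckeWeight σ β r) : IsBraiding (sixVertexMatrix σ β) := by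
  refine isBraiding_sixVertexMatrix (fun a b c ↦ ?_) (fun a b c ↦ ?_) h.diag_cubic
  · obtain rfl | hab := eq_or_ne a b
    · simp only [h.swap_self, zero_mul]
    · rw [h.diag_quadratic_left hab]
  · obtain rfl | hbc := eq_or_ne b c
    · simp only [h.swap_self, zero_mul]
    · rw [h.diag_quadratic_right a hbc]

end IsHeckeWeight

end Hecke

section TwistedKronecker

/-- The matrix of `σ₂₃ ∘ (M₁ ⊗ M₂) ∘ σ₂₃⁻¹` on `(V₁ ⊗ V₂) ⊗ (V₁ ⊗ V₂)`, where `σ₂₃` exchanges the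
two middle factors `x_{a'} ⊗ y_b` with the sign `ε a' b = ±1`. -/
def twistedKronecker (ε : ι₁ → ι₂ → K) (M₁ : Matrix (ι₁ × ι₁) (ι₁ × ι₁) K)
    (M₂ : Matrix (ι₂ × ι₂) (ι₂ × ι₂) K) :
    Matrix ((ι₁ × ι₂) × (ι₁ × ι₂)) ((ι₁ × ι₂) × (ι₁ × ι₂)) K :=
  Matrix.of fun out inp =>
    ε inp.2.1 inp.1.2 * ε out.2.1 out.1.2 *
      (M₁ (out.1.1, out.2.1) (inp.1.1, inp.2.1) * M₂ (out.1.2, out.2.2) (inp.1.2, inp.2.2))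

variable (ι₁ ι₂) in
/-- Separation of the `V₁`- and `V₂`-indices of a basis vector of `(V₁ ⊗ V₂)^{⊗3}`. -/
def unzipTriple :
    (ι₁ × ι₂) × (ι₁ × ι₂) × (ι₁ × ι₂) ≃ (ι₁ × ι₁ × ι₁) × (ι₂ × ι₂ × ι₂) :=
  ((Equiv.refl _).prodCongr (Equiv.prodProdProdComm ι₁ ι₂ ι₁ ι₂)).trans
    (Equiv.prodProdProdComm ι₁ ι₂ (ι₁ × ι₁) (ι₂ × ι₂))

/-- The sign of the permutation unzipping `x_{a₁} ⊗ y_{b₁} ⊗ x_{a₂} ⊗ y_{b₂} ⊗ x_{a₃} ⊗ y_{b₃}`: one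
factor for each `x` that moves past a `y`. -/
def unzipSign (ε : ι₁ → ι₂ → K) (p : (ι₁ × ι₂) × (ι₁ × ι₂) × (ι₁ × ι₂)) : K :=
  ε p.2.1.1 p.1.2 * ε p.2.2.1 p.1.2 * ε p.2.2.1 p.2.1.2

theorem unzipSign_mul_self {ε : ι₁ → ι₂ → K} (hε : ∀ a b, ε a b * ε a b = 1)
    (p : (ι₁ × ι₂) × (ι₁ × ι₂) × (ι₁ × ι₂)) : unzipSign ε p * unzipSign ε p = 1 := by
  simp only [unzipSign, mul_mul_mul_comm _ (ε _ _) _ (ε _ _), hε, mul_one]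

/-- The analogue of `twistedKronecker` on three legs: the Kronecker product of `A` and `B`,
conjugated by the signed permutation that separates the `V₁`- from the `V₂`-factors. -/
def twistedKronecker₃ [DecidableEq ι₁] [DecidableEq ι₂] [Fintype ι₁] [Fintype ι₂]
    (ε : ι₁ → ι₂ → K) (A : Matrix (ι₁ × ι₁ × ι₁) (ι₁ × ι₁ × ι₁) K)
    (B : Matrix (ι₂ × ι₂ × ι₂) (ι₂ × ι₂ × ι₂) K) :
    Matrix ((ι₁ × ι₂) × (ι₁ × ι₂) × (ι₁ × ι₂)) ((ι₁ × ι₂) × (ι₁ × ι₂) × (ι₁ × ι₂)) K :=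
  Matrix.diagonal (unzipSign ε) * (A ⊗ₖ B).submatrix (unzipTriple ι₁ ι₂) (unzipTriple ι₁ ι₂) *
    Matrix.diagonal (unzipSign ε)

variable [DecidableEq ι₁] [DecidableEq ι₂] [Fintype ι₁] [Fintype ι₂] {ε : ι₁ → ι₂ → K}

theorem twistedKronecker₃_apply (ε : ι₁ → ι₂ → K) (A : Matrix (ι₁ × ι₁ × ι₁) (ι₁ × ι₁ × ι₁) K)
    (B : Matrix (ι₂ × ι₂ × ι₂) (ι₂ × ι₂ × ι₂) K)
    (a₁ a₂ a₃ a₁' a₂' a₃' : ι₁) (b₁ b₂ b₃ b₁' b₂' b₃' : ι₂) :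
    twistedKronecker₃ ε A B ((a₁, b₁), (a₂, b₂), (a₃, b₃)) ((a₁', b₁'), (a₂', b₂'), (a₃', b₃')) =
      (ε a₂ b₁ * ε a₃ b₁ * ε a₃ b₂) *
        (A (a₁, a₂, a₃) (a₁', a₂', a₃') * B (b₁, b₂, b₃) (b₁', b₂', b₃')) *
        (ε a₂' b₁' * ε a₃' b₁' * ε a₃' b₂') := by
  rw [twistedKronecker₃, Matrix.mul_diagonal, Matrix.diagonal_mul]
  rfl

theorem twistedKronecker₃_mul (hε : ∀ a b, ε a b * ε a b = 1)
    (A A' : Matrix (ι₁ × ι₁ × ι₁) (ι₁ × ι₁ × ι₁) K)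
    (B B' : Matrix (ι₂ × ι₂ × ι₂) (ι₂ × ι₂ × ι₂) K) :
    twistedKronecker₃ ε A B * twistedKronecker₃ ε A' B' =
      twistedKronecker₃ ε (A * A') (B * B') := by
  have sign_sq : Matrix.diagonal (unzipSign ε) * Matrix.diagonal (unzipSign ε) = 1 := by
    simp only [Matrix.diagonal_mul_diagonal, unzipSign_mul_self hε, Matrix.diagonal_one]
  simp only [twistedKronecker₃, Matrix.mul_kronecker_mul,
    ← Matrix.submatrix_mul_equiv _ _ _ (unzipTriple ι₁ ι₂)]
  simp only [Matrix.mul_assoc]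
  rw [← Matrix.mul_assoc (Matrix.diagonal _) (Matrix.diagonal _), sign_sq, Matrix.one_mul]

theorem leg12_twistedKronecker (hε : ∀ a b, ε a b * ε a b = 1)
    (M₁ : Matrix (ι₁ × ι₁) (ι₁ × ι₁) K) {M₂ : Matrix (ι₂ × ι₂) (ι₂ × ι₂) K} (hM₂ : IceRule M₂) :
    leg12 (twistedKronecker ε M₁ M₂) = twistedKronecker₃ ε (leg12 M₁) (leg12 M₂) := by
  ext ⟨⟨a₁, b₁⟩, ⟨a₂, b₂⟩, ⟨a₃, b₃⟩⟩ ⟨⟨a₁', b₁'⟩, ⟨a₂', b₂'⟩, ⟨a₃', b₃'⟩⟩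
  simp only [leg12_apply, twistedKronecker₃_apply, twistedKronecker, Matrix.of_apply]
  by_cases ha₃ : a₃ = a₃'
  swap
  · simp [ha₃]
  by_cases hb₃ : b₃ = b₃'
  swap
  · simp [hb₃]
  by_cases h : M₂ (b₁, b₂) (b₁', b₂') = 0
  · simp [h]
  subst ha₃ hb₃
  have idle_sign : (ε a₃ b₁ * ε a₃ b₂) * (ε a₃ b₁' * ε a₃ b₂') = 1 := by
    rw [← hM₂.mul_eq_mul (ε a₃) h, mul_mul_mul_comm, hε, hε, one_mul]
  simp only [Matrix.one_apply_eq]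
  linear_combination -(ε a₂' b₁' * ε a₂ b₁ *
    (M₁ (a₁, a₂) (a₁', a₂') * M₂ (b₁, b₂) (b₁', b₂'))) * idle_sign

theorem leg23_twistedKronecker (hε : ∀ a b, ε a b * ε a b = 1)
    {M₁ : Matrix (ι₁ × ι₁) (ι₁ × ι₁) K} (hM₁ : IceRule M₁) (M₂ : Matrix (ι₂ × ι₂) (ι₂ × ι₂) K) :
    leg23 (twistedKronecker ε M₁ M₂) = twistedKronecker₃ ε (leg23 M₁) (leg23 M₂) := by
  ext ⟨⟨a₁, b₁⟩, ⟨a₂, b₂⟩, ⟨a₃, b₃⟩⟩ ⟨⟨a₁', b₁'⟩, ⟨a₂', b₂'⟩, ⟨a₃', b₃'⟩⟩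
  simp only [leg23_apply, twistedKronecker₃_apply, twistedKronecker, Matrix.of_apply]
  by_cases ha₁ : a₁ = a₁'
  swap
  · simp [ha₁]
  by_cases hb₁ : b₁ = b₁'
  swap
  · simp [hb₁]
  by_cases h : M₁ (a₂, a₃) (a₂', a₃') = 0
  · simp [h]
  subst ha₁ hb₁
  have idle_sign : (ε a₂ b₁ * ε a₃ b₁) * (ε a₂' b₁ * ε a₃' b₁) = 1 := by
    rw [← hM₁.mul_eq_mul (ε · b₁) h, mul_mul_mul_comm, hε, hε, one_mul]
  simp only [Matrix.one_apply_eq]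
  linear_combination -(ε a₃' b₂' * ε a₃ b₂ *
    (M₁ (a₂, a₃) (a₂', a₃') * M₂ (b₂, b₃) (b₂', b₃'))) * idle_sign

theorem IsBraiding.twistedKronecker (hε : ∀ a b, ε a b * ε a b = 1)
    {M₁ : Matrix (ι₁ × ι₁) (ι₁ × ι₁) K} {M₂ : Matrix (ι₂ × ι₂) (ι₂ × ι₂) K}
    (h₁ : IsBraiding M₁) (h₂ : IsBraiding M₂) (hM₁ : IceRule M₁) (hM₂ : IceRule M₂) :
    IsBraiding (twistedKronecker ε M₁ M₂) := by
  rw [IsBraiding] at h₁ h₂ ⊢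
  simp only [leg12_twistedKronecker hε M₁ hM₂, leg23_twistedKronecker hε hM₁ M₂,
    twistedKronecker₃_mul hε, h₁, h₂]

end TwistedKronecker

end TensorSquare

section QuantumSuperspace

variable {F : Type*} [Field F]

variable (F) in
/-- The coefficient of `u_b ⊗ u_a` in `Ř (u_a ⊗ u_b)`, with parity `1` iff the index is at least
`t`; on the diagonal it is set to `0`, leaving `Ř (u_a ⊗ u_a)` to `RmatDiag`. -/
def RmatSwap (t : ℕ) {N : ℕ} (a b : Fin N) : F :=
  if a = b then 0 else if t ≤ (a : ℕ) ∧ t ≤ (b : ℕ) then -1 else 1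

/-- The coefficient of `u_a ⊗ u_b` in `Ř (u_a ⊗ u_b)`, with parity `1` iff the index is at least
`t`. -/
def RmatDiag (q : F) (t : ℕ) {N : ℕ} (a b : Fin N) : F :=
  if a = b then if (a : ℕ) < t then q⁻¹ else -q else if b < a then q⁻¹ - q else 0

theorem Rmat_eq_sixVertexMatrix (q : F) (t N : ℕ) :
    Rmat F q t N = sixVertexMatrix (RmatSwap F t) (RmatDiag q t) := by
  ext out inp
  simp only [Rmat, sixVertexMatrix, RmatSwap, RmatDiag, Matrix.of_apply, Prod.swap]
  split_ifs <;> simp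

theorem isHeckeWeight_Rmat {q : F} (hq : q ≠ 0) (t N : ℕ) :
    IsHeckeWeight (RmatSwap F t (N := N)) (RmatDiag q t) (q⁻¹ - q) where
  swap_self a := if_pos rfl
  swap_mul_swap {a b} hab := by
    simp only [RmatSwap, if_neg hab, if_neg hab.symm, and_comm (a := t ≤ (b : ℕ))]
    split_ifs <;> ring
  diag_of_lt hab := by simp [RmatDiag, hab.ne, hab.not_gt]
  diag_of_gt hba := by simp [RmatDiag, hba.ne', hba]
  diag_self_sq a := by
    simp only [RmatDiag, if_true]
    split_ifs <;> field_simp <;> ring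

theorem iceRule_Rmat (q : F) (t N : ℕ) : IceRule (Rmat F q t N) :=
  Rmat_eq_sixVertexMatrix q t N ▸ iceRule_sixVertexMatrix _ _

theorem isBraiding_Rmat {q : F} (hq : q ≠ 0) (t N : ℕ) : IsBraiding (Rmat F q t N) :=
  Rmat_eq_sixVertexMatrix q t N ▸ (isHeckeWeight_Rmat hq t N).isBraiding

theorem sgn12_mul_self (m k : ℕ) {N₁ N₂ : ℕ} (a : Fin N₁) (b : Fin N₂) :
    sgn12 F m k a b * sgn12 F m k a b = 1 := by
  unfold sgn12
  split_ifs <;> ring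

theorem isBraiding_Rcal {q : F} (hq : q ≠ 0) (m N₁ k N₂ : ℕ) : IsBraiding (Rcal F q m N₁ k N₂) :=
  (isBraiding_Rmat hq m N₁).twistedKronecker (sgn12_mul_self m k) (isBraiding_Rmat hq k N₂)
    (iceRule_Rmat q m N₁) (iceRule_Rmat q k N₂)

theorem Rcal12_eq_leg12 (q : F) (m N₁ k N₂ : ℕ) :
    Rcal12 F q m N₁ k N₂ = leg12 (Rcal F q m N₁ k N₂) :=
  rfl

theorem Rcal23_eq_leg23 (q : F) (m N₁ k N₂ : ℕ) :
    Rcal23 F q m N₁ k N₂ = leg23 (Rcal F q m N₁ k N₂) :=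
  rfl

end QuantumSuperspace

/-- The operator `𝓡` satisfies the braid relation
`(𝓡 ⊗ id) ∘ (id ⊗ 𝓡) ∘ (𝓡 ⊗ id) = (id ⊗ 𝓡) ∘ (𝓡 ⊗ id) ∘ (id ⊗ 𝓡)` on
`(V₁⊗V₂) ⊗ (V₁⊗V₂) ⊗ (V₁⊗V₂)`. -/
theorem stmt8 (F : Type*) [Field F] (q : F) (hq : q ≠ 0)
    (m n k l : ℕ) (hmn : 1 ≤ m + n) (hkl : 1 ≤ k + l) :
    Matrix.toLin' (Rcal12 F q m (m + n) k (k + l)) ∘ₗ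
        Matrix.toLin' (Rcal23 F q m (m + n) k (k + l)) ∘ₗ
        Matrix.toLin' (Rcal12 F q m (m + n) k (k + l)) =
      Matrix.toLin' (Rcal23 F q m (m + n) k (k + l)) ∘ₗ
        Matrix.toLin' (Rcal12 F q m (m + n) k (k + l)) ∘ₗ
        Matrix.toLin' (Rcal23 F q m (m + n) k (k + l)) := by
  simp only [Rcal12_eq_leg12, Rcal23_eq_leg23, ← Matrix.toLin'_mul, ← Matrix.mul_assoc]
  exact congrArg Matrix.toLin' (isBraiding_Rcal hq m (m + n) k (k + l))
end
end

section
/- For every N ≥ 0, the images in A of the monomials z_{a₁b₁}·z_{a₂b₂}⋯z_{a_N b_N} indexed by the sequences of pairs satisfying (a₁,b₁) ≤ (a₂,b₂) ≤ ⋯ ≤ (a_N,b_N) in the anti-lexicographic order, and such that an equality (a_i,b_i) = (a_{i+1},b_{i+1}) occurs only when the pair (a_i,b_i) is odd, form a K-basis of A_N. -/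
noncomputable section

/-- The ground field `K = ℂ(q)`. -/
abbrev Kq : Type := RatFunc ℂ

/-- The variable `q ∈ ℂ(q)`. -/
def qv : Kq := RatFunc.X

/-- The index set of the generators `z_{ab}` (0-based: `z_{ab}` corresponds to the pair
`(a−1, b−1)`); the index `a` has parity `1` iff `m ≤ a` and the index `b` has parity `1`
iff `k ≤ b`. -/
abbrev Idx (m n k l : ℕ) : Type := Fin (m + n) × Fin (k + l)

/-- The generator `z_{ab}` of the free algebra. -/
def zgen (m n k l : ℕ) (p : Idx m n k l) : FreeAlgebra Kq (Idx m n k l) :=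
  FreeAlgebra.ι Kq p

/-- The sign `(−1)^{|a||b|}` for two indices with parity `1` iff `≥ t`. -/
def sgn (t : ℕ) {N : ℕ} (a b : Fin N) : Kq :=
  if t ≤ (a : ℕ) ∧ t ≤ (b : ℕ) then -1 else 1

/-- The defining relators of the quantum exterior algebra
`Λ_q(ℂ_q^{m|n} ⊗ ℂ_q^{k|l})`, cf. (4.57) in the paper. -/
def relSet (m n k l : ℕ) : Set (FreeAlgebra Kq (Idx m n k l)) :=
  { r |
    (∃ a : Fin (m + n), ∃ b : Fin (k + l), ((m ≤ (a : ℕ)) ↔ (k ≤ (b : ℕ))) ∧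
        r = zgen m n k l (a, b) * zgen m n k l (a, b)) ∨
    (∃ a b : Fin (m + n), ∃ c : Fin (k + l), a < b ∧ (c : ℕ) < k ∧
        r = zgen m n k l (a, c) * zgen m n k l (b, c) +
          (sgn m a b * qv⁻¹) • (zgen m n k l (b, c) * zgen m n k l (a, c))) ∨
    (∃ a : Fin (m + n), ∃ c d : Fin (k + l), (a : ℕ) < m ∧ c < d ∧
        r = zgen m n k l (a, c) * zgen m n k l (a, d) +
          (sgn k c d * qv⁻¹) • (zgen m n k l (a, d) * zgen m n k l (a, c))) ∨
    (∃ a b : Fin (m + n), ∃ c d : Fin (k + l), a < b ∧ c < d ∧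
        r = zgen m n k l (a, c) * zgen m n k l (b, d) +
          (sgn m a b * sgn k c d) • (zgen m n k l (b, d) * zgen m n k l (a, c))) ∨
    (∃ a b : Fin (m + n), ∃ c d : Fin (k + l), b < a ∧ c < d ∧
        r = zgen m n k l (a, c) * zgen m n k l (b, d) +
          (sgn m a b * sgn k c d) • (zgen m n k l (b, d) * zgen m n k l (a, c)) -
          (sgn m a b * (qv⁻¹ - qv)) • (zgen m n k l (b, c) * zgen m n k l (a, d))) ∨
    (∃ a : Fin (m + n), ∃ c d : Fin (k + l), m ≤ (a : ℕ) ∧ c < d ∧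
        r = zgen m n k l (a, c) * zgen m n k l (a, d) -
          (sgn k c d * qv) • (zgen m n k l (a, d) * zgen m n k l (a, c))) ∨
    (∃ a b : Fin (m + n), ∃ c : Fin (k + l), a < b ∧ k ≤ (c : ℕ) ∧
        r = zgen m n k l (a, c) * zgen m n k l (b, c) -
          (sgn m a b * qv) • (zgen m n k l (b, c) * zgen m n k l (a, c))) }

/-- The relation whose `RingQuot` is the quotient of the free algebra by the two-sided
ideal generated by `relSet`. -/
def qrel (m n k l : ℕ) :
    FreeAlgebra Kq (Idx m n k l) → FreeAlgebra Kq (Idx m n k l) → Prop :=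
  fun x y => x ∈ relSet m n k l ∧ y = 0

/-- The quantum exterior algebra `A = Λ_q(ℂ_q^{m|n} ⊗ ℂ_q^{k|l})`. -/
abbrev QExt (m n k l : ℕ) : Type := RingQuot (qrel m n k l)

/-- The quotient map from the free algebra onto `A`. -/
def qmk (m n k l : ℕ) : FreeAlgebra Kq (Idx m n k l) →ₐ[Kq] QExt m n k l :=
  RingQuot.mkAlgHom Kq (qrel m n k l)

/-- The image in `A` of the ordered monomial `z_{a₁b₁}·z_{a₂b₂}⋯z_{a_N b_N}` determined by
`f : Fin N → Idx`. -/
def qmonomial (m n k l N : ℕ) (f : Fin N → Idx m n k l) : QExt m n k l :=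
  (List.ofFn fun i => qmk m n k l (zgen m n k l (f i))).prod

/-- The degree-`N` piece `A_N` of `A`: the span of the images of all products of exactly
`N` generators. -/
def qdeg (m n k l N : ℕ) : Submodule Kq (QExt m n k l) :=
  Submodule.span Kq { x | ∃ f : Fin N → Idx m n k l, x = qmonomial m n k l N f }

/-- The anti-lexicographic order on index pairs: `(a,b) ≤ (a',b')` iff `b < b'`, or
`b = b'` and `a ≤ a'`. -/
def antilexLE (m n k l : ℕ) (p p' : Idx m n k l) : Prop :=
  p.2 < p'.2 ∨ (p.2 = p'.2 ∧ p.1 ≤ p'.1)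

/-- The pair `(a,b)` is odd iff `|a| ≠ |b|`. -/
def isOddPair (m n k l : ℕ) (p : Idx m n k l) : Prop :=
  ¬ ((m ≤ (p.1 : ℕ)) ↔ (k ≤ (p.2 : ℕ)))

/-- A sequence of index pairs is admissible if it is weakly increasing in the
anti-lexicographic order and consecutive equal entries occur only at odd pairs. -/
def admissible (m n k l N : ℕ) (f : Fin N → Idx m n k l) : Prop :=
  (∀ i j : Fin N, i ≤ j → antilexLE m n k l (f i) (f j)) ∧
    ∀ i j : Fin N, (i : ℕ) + 1 = (j : ℕ) → f i = f j → isOddPair m n k l (f i)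

/-!
The defining relations say that a Hecke operator acting on the row indices of two neighbouring
generators agrees with one acting on their column indices. Oriented by the anti-lexicographic order
they become rewriting rules for words, whose irreducible words are the admissible ones. By Bergman's
diamond lemma the irreducible words form a basis as soon as the two ways of rewriting a three-letter
word are reconcilable; this follows from the braid relation of the Hecke operator and its effect on
the eigenvectors that describe two letters in the same column.

The diamond lemma itself comes from duality: every function on irreducible words extends to a
function on words compatible with the rules, and the algebra acts on the compatible functions by
translation, so that these separate the irreducible words.
-/

/-! ### Quadratic rewriting systems -/

/-- A quadratic rewriting system on words in the alphabet `X`: a reducible two-letter word `xy` is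
replaced by the formal combination `rhs x y` of two-letter words, all of which start with a letter
smaller than `x`. -/
structure QuadraticRewriting (K X : Type*) [CommRing K] where
  lt : X → X → Prop
  wf : WellFounded lt
  Reducible : X → X → Prop
  rhs : X → X → (X × X →₀ K)
  rhs_mem_supported {x y : X} : Reducible x y → rhs x y ∈ Finsupp.supported K K {p | lt p.1 x}

namespace QuadraticRewriting

open Finsupp

section Words

variable {X : Type*} {r : X → X → Prop}

lemma shortlex_append_append {s t : List X} (h : List.Shortlex r s t) (u v : List X) :
    List.Shortlex r (u ++ s ++ v) (u ++ t ++ v) := by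
  rw [List.append_assoc, List.append_assoc]
  apply List.Shortlex.append_left
  rcases List.shortlex_def.1 h with hlen | ⟨hlen, hlex⟩
  · exact .of_length_lt (by simpa using hlen)
  · refine .of_lex (by simpa using hlen) ?_
    clear h
    induction hlex with
    | nil => simp at hlen
    | cons _ ih => exact .cons (ih (by simpa using hlen))
    | rel h => exact .rel h

lemma shortlex_append_cons_cons {p x : X} (h : r p x) (u : List X) (q y : X) (v : List X) :
    List.Shortlex r (u ++ p :: q :: v) (u ++ x :: y :: v) :=
  (List.Shortlex.of_lex (by simp) (.rel h)).append_left u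

end Words

section LinearCombination

variable {K M ι κ : Type*} [CommRing K] [AddCommGroup M] [Module K M]

lemma linearCombination_congr_of_mem_supported {s : Set ι} {ℓ : ι →₀ K}
    (hℓ : ℓ ∈ supported K K s) {F F' : ι → M} (h : ∀ i ∈ s, F i = F' i) :
    linearCombination K F ℓ = linearCombination K F' ℓ :=
  Finsupp.sum_congr fun i hi => by simp only [h i (hℓ hi)]

lemma linearCombination_comm (F : ι → κ → M) (ℓ : ι →₀ K) (ℓ' : κ →₀ K) :
    linearCombination K (fun i => linearCombination K (F i) ℓ') ℓ =
      linearCombination K (fun j => linearCombination K (fun i => F i j) ℓ) ℓ' := by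
  simp only [linearCombination_apply, Finsupp.smul_sum]
  rw [Finsupp.sum_comm]
  exact Finsupp.sum_congr fun j _ => Finsupp.sum_congr fun i _ => smul_comm _ _ _

lemma linearCombination_comp_mapDomain (f : ι → κ) (g : κ → M) (ℓ : ι →₀ K) :
    linearCombination K g (ℓ.mapDomain f) = linearCombination K (fun i => g (f i)) ℓ :=
  linearCombination_mapDomain K f ℓ

end LinearCombination

section Reduction

variable {K X M A : Type*} [CommRing K] (S : QuadraticRewriting K X)
variable [AddCommGroup M] [Module K M] [Ring A] [Algebra K A]

/-- `S.Step w ℓ` says that `ℓ` arises from the word `w` by rewriting one reducible pair of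
neighbouring letters. -/
inductive Step : List X → (List X →₀ K) → Prop
  | mk {x y : X} (u v : List X) (h : S.Reducible x y) :
      Step (u ++ x :: y :: v) ((S.rhs x y).mapDomain fun p => u ++ p.1 :: p.2 :: v)

/-- A word is irreducible if no rewriting rule applies to it. -/
def Irreducible (w : List X) : Prop := ∀ ℓ, ¬ S.Step w ℓ

/-- A function on words is compatible with the rewriting system if each rewriting step preserves
its linear extension to formal combinations of words. -/
def Compatible (g : List X → M) : Prop := ∀ ⦃w ℓ⦄, S.Step w ℓ → g w = linearCombination K g ℓ

/-- Compatibility with the rewriting steps of the words smaller than `w`. -/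
def CompatibleBelow (w : List X) (g : List X → M) : Prop :=
  ∀ ⦃w' ℓ⦄, List.Shortlex S.lt w' w → S.Step w' ℓ → g w' = linearCombination K g ℓ

/-- Bergman's condition that the overlap ambiguities `xyz` are resolvable relative to the word
order, tested on scalar-valued functions instead of modulo the relations below `xyz`. -/
def Confluent : Prop :=
  ∀ ⦃x y z : X⦄, S.Reducible x y → S.Reducible y z →
    ∀ g : List X → K, S.CompatibleBelow [x, y, z] g →
      linearCombination K (fun p : X × X => g [p.1, p.2, z]) (S.rhs x y) =
        linearCombination K (fun p : X × X => g [x, p.1, p.2]) (S.rhs y z)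

/-- The elements `z x` of an algebra satisfy the quadratic relations `xy = rhs x y`. -/
def Satisfies (z : X → A) : Prop :=
  ∀ ⦃x y⦄, S.Reducible x y →
    z x * z y = linearCombination K (fun p : X × X => z p.1 * z p.2) (S.rhs x y)

variable {S}

lemma irreducible_iff_isChain {w : List X} :
    S.Irreducible w ↔ w.IsChain fun x y => ¬ S.Reducible x y := by
  rw [List.isChain_iff_forall_rel_of_append_cons_cons]
  constructor
  · rintro h x y u v rfl hxy
    exact h _ (.mk u v hxy)
  · rintro h _ ⟨u, v, hxy⟩
    exact h rfl hxy

lemma Step.append {w : List X} {ℓ : List X →₀ K} (h : S.Step w ℓ) (s t : List X) :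
    S.Step (s ++ w ++ t) (ℓ.mapDomain fun w => s ++ w ++ t) := by
  obtain ⟨u, v, hxy⟩ := h
  rw [← mapDomain_comp]
  simpa [Function.comp_def] using Step.mk (s ++ u) (v ++ t) hxy

lemma Step.mem_supported {w : List X} {ℓ : List X →₀ K} (h : S.Step w ℓ) :
    ℓ ∈ supported K K {w' | List.Shortlex S.lt w' w ∧ w'.length = w.length} := by
  classical
  obtain ⟨u, v, hxy⟩ := h
  intro w' hw'
  obtain ⟨p, hp, rfl⟩ := Finset.mem_image.1 (mapDomain_support hw')
  exact ⟨shortlex_append_cons_cons (S.rhs_mem_supported hxy hp) _ _ _ _, by simp⟩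

lemma CompatibleBelow.comp_append {u w v : List X} {g : List X → M}
    (hg : S.CompatibleBelow (u ++ w ++ v) g) :
    S.CompatibleBelow w fun w' => g (u ++ w' ++ v) := fun _ _ hlt hstep => by
  beta_reduce
  rw [hg (shortlex_append_append hlt u v) (hstep.append u v), linearCombination_comp_mapDomain]

lemma CompatibleBelow.apply_append_cons_cons {w u v : List X} {x y : X} {g : List X → M}
    (hg : S.CompatibleBelow w g) (hlt : List.Shortlex S.lt (u ++ x :: y :: v) w)
    (hxy : S.Reducible x y) :
    g (u ++ x :: y :: v) =
      linearCombination K (fun p : X × X => g (u ++ p.1 :: p.2 :: v)) (S.rhs x y) := by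
  rw [hg hlt (.mk u v hxy), linearCombination_comp_mapDomain]

/-! ### The diamond lemma -/

lemma CompatibleBelow.disjoint_resolvable {x y x' y' : X} {u t v : List X} {g : List X → M}
    (hg : S.CompatibleBelow (u ++ x :: y :: (t ++ x' :: y' :: v)) g)
    (hxy : S.Reducible x y) (hxy' : S.Reducible x' y') :
    linearCombination K (fun p : X × X => g (u ++ p.1 :: p.2 :: (t ++ x' :: y' :: v)))
        (S.rhs x y) =
      linearCombination K (fun p : X × X => g (u ++ x :: y :: (t ++ p.1 :: p.2 :: v)))
        (S.rhs x' y') := by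
  have rewrite_right : ∀ p : X × X, S.lt p.1 x →
      g (u ++ p.1 :: p.2 :: (t ++ x' :: y' :: v)) =
        linearCombination K (fun p' : X × X => g (u ++ p.1 :: p.2 :: (t ++ p'.1 :: p'.2 :: v)))
          (S.rhs x' y') := fun p hp => by
    simpa using hg.apply_append_cons_cons (u := u ++ p.1 :: p.2 :: t)
      (by simpa using shortlex_append_cons_cons hp u p.2 y (t ++ x' :: y' :: v)) hxy'
  have rewrite_left : ∀ p' : X × X, S.lt p'.1 x' →
      g (u ++ x :: y :: (t ++ p'.1 :: p'.2 :: v)) =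
        linearCombination K (fun p : X × X => g (u ++ p.1 :: p.2 :: (t ++ p'.1 :: p'.2 :: v)))
          (S.rhs x y) := fun p' hp' =>
    hg.apply_append_cons_cons
      (by simpa using shortlex_append_cons_cons hp' (u ++ x :: y :: t) p'.2 y' v) hxy
  rw [linearCombination_congr_of_mem_supported (S.rhs_mem_supported hxy) rewrite_right,
    linearCombination_congr_of_mem_supported (S.rhs_mem_supported hxy') rewrite_left,
    linearCombination_comm]

lemma Confluent.overlap_resolvable (hS : S.Confluent) {x y z : X} {u v : List X} {g : List X → K}
    (hg : S.CompatibleBelow (u ++ x :: y :: z :: v) g)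
    (hxy : S.Reducible x y) (hyz : S.Reducible y z) :
    linearCombination K (fun p : X × X => g (u ++ p.1 :: p.2 :: z :: v)) (S.rhs x y) =
      linearCombination K (fun p : X × X => g (u ++ x :: p.1 :: p.2 :: v)) (S.rhs y z) := by
  have hg' : S.CompatibleBelow (u ++ [x, y, z] ++ v) g := by simpa using hg
  simpa using hS hxy hyz _ hg'.comp_append

lemma Confluent.resolvable_of_length_le (hS : S.Confluent) {x y x' y' : X} {u v u' v' : List X}
    {g : List X → K} (hg : S.CompatibleBelow (u ++ x :: y :: v) g)
    (hxy : S.Reducible x y) (hxy' : S.Reducible x' y')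
    (hw : u ++ x :: y :: v = u' ++ x' :: y' :: v') (hlen : u.length ≤ u'.length) :
    linearCombination K (fun p : X × X => g (u ++ p.1 :: p.2 :: v)) (S.rhs x y) =
      linearCombination K (fun p : X × X => g (u' ++ p.1 :: p.2 :: v')) (S.rhs x' y') := by
  obtain ⟨s, rfl⟩ : u <+: u' := List.prefix_of_prefix_length_le ⟨_, hw⟩ ⟨_, rfl⟩ hlen
  rw [List.append_assoc, List.append_cancel_left_eq] at hw
  match s, hw with
  | [], hw =>
    obtain ⟨rfl, rfl, rfl⟩ : x = x' ∧ y = y' ∧ v = v' := by simpa using hw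
    simp
  | [a], hw =>
    obtain ⟨rfl, rfl, rfl⟩ : x = a ∧ y = x' ∧ v = y' :: v' := by simpa using hw
    simpa using hS.overlap_resolvable hg hxy hxy'
  | a :: b :: t, hw =>
    obtain ⟨rfl, rfl, rfl⟩ : x = a ∧ y = b ∧ v = t ++ x' :: y' :: v' := by simpa using hw
    simpa using hg.disjoint_resolvable hxy hxy'

lemma Confluent.linearCombination_eq_of_step (hS : S.Confluent) {w : List X} {ℓ ℓ' : List X →₀ K}
    {g : List X → K} (hg : S.CompatibleBelow w g) (hℓ : S.Step w ℓ) (hℓ' : S.Step w ℓ') :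
    linearCombination K g ℓ = linearCombination K g ℓ' := by
  obtain ⟨u, v, hxy⟩ := hℓ
  generalize hw : u ++ _ :: _ :: v = w at hℓ'
  obtain ⟨u', v', hxy'⟩ := hℓ'
  rw [linearCombination_comp_mapDomain, linearCombination_comp_mapDomain]
  rcases le_total u.length u'.length with hlen | hlen
  · exact hS.resolvable_of_length_le hg hxy hxy' hw hlen
  · exact (hS.resolvable_of_length_le (hw ▸ hg) hxy' hxy hw.symm hlen).symm

open Classical in
variable (S) in
/-- The extension of a function on irreducible words to all words along arbitrarily chosen
rewriting steps. Values at words which are not smaller than `w` do not enter the recursion. -/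
def extend (g₀ : List X → K) (w : List X) : K :=
  if h : ∃ ℓ, S.Step w ℓ then
    linearCombination K
      (fun w' => if _hlt : List.Shortlex S.lt w' w then extend g₀ w' else 0) h.choose
  else g₀ w
termination_by (List.Shortlex.wf S.wf).wrap w
decreasing_by exact _hlt

lemma extend_of_irreducible (g₀ : List X → K) {w : List X} (hw : S.Irreducible w) :
    S.extend g₀ w = g₀ w := by
  rw [extend, dif_neg (not_exists.2 hw)]

lemma exists_step_extend_eq (g₀ : List X → K) {w : List X} (h : ∃ ℓ, S.Step w ℓ) :
    ∃ ℓ, S.Step w ℓ ∧ S.extend g₀ w = linearCombination K (S.extend g₀) ℓ := by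
  refine ⟨h.choose, h.choose_spec, ?_⟩
  rw [extend, dif_pos h]
  exact linearCombination_congr_of_mem_supported h.choose_spec.mem_supported
    fun w' hw' => dif_pos hw'.1

theorem Confluent.compatible_extend (hS : S.Confluent) (g₀ : List X → K) :
    S.Compatible (S.extend g₀) := by
  intro w
  induction w using (List.Shortlex.wf S.wf).induction with
  | _ w ih =>
    intro ℓ hℓ
    obtain ⟨ℓ', hℓ', hw⟩ := exists_step_extend_eq g₀ ⟨ℓ, hℓ⟩
    rw [hw]
    exact hS.linearCombination_eq_of_step (fun w' _ hlt h => ih w' hlt h) hℓ' hℓ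

/-! ### Algebras with quadratic relations -/

lemma Satisfies.compatible_prod {z : X → A} (hz : S.Satisfies z) :
    S.Compatible fun w => (w.map z).prod := by
  rintro _ _ ⟨u, v, hxy⟩
  have := congrArg (LinearMap.mulLeft K (u.map z).prod ∘ₗ LinearMap.mulRight K (v.map z).prod)
    (hz hxy)
  rw [apply_linearCombination] at this
  rw [linearCombination_comp_mapDomain]
  simpa [mul_assoc, Function.comp_def] using this

theorem Satisfies.prod_mem_span_irreducible {z : X → A} (hz : S.Satisfies z) (w : List X) :
    (w.map z).prod ∈ Submodule.span K
      {a | ∃ w', S.Irreducible w' ∧ w'.length = w.length ∧ a = (w'.map z).prod} := by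
  induction w using (List.Shortlex.wf S.wf).induction with
  | _ w ih =>
    by_cases hw : S.Irreducible w
    · exact Submodule.subset_span ⟨w, hw, rfl, rfl⟩
    obtain ⟨ℓ, hℓ⟩ : ∃ ℓ, S.Step w ℓ := by simpa [Irreducible] using hw
    rw [show (w.map z).prod = _ from hz.compatible_prod hℓ]
    refine Submodule.sum_mem _ fun w' hw' => Submodule.smul_mem _ _ ?_
    obtain ⟨hlt, hlen⟩ := hℓ.mem_supported hw'
    exact hlen ▸ ih w' hlt

variable (S)

/-- The space of scalar-valued compatible functions: the graded dual of the algebra presented by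
the rewriting system, inside the dual of the free algebra. -/
def compatible : Submodule K (List X → K) where
  carrier := {g | S.Compatible g}
  add_mem' hg hg' w ℓ h := by
    simp [hg h, hg' h, linearCombination_apply, mul_add, Finsupp.sum_add]
  zero_mem' w ℓ _ := by simp
  smul_mem' c g hg w ℓ h := by
    simp [hg h, linearCombination_apply, Finsupp.mul_sum, mul_left_comm]

/-- The action of a letter on compatible functions, dual to right multiplication by it. -/
def translate (x : X) : Module.End K S.compatible :=
  (LinearMap.funLeft K K (· ++ [x])).restrict fun g (hg : S.Compatible g) w ℓ h => by
    have := hg (h.append [] [x])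
    rw [linearCombination_comp_mapDomain] at this
    exact this

lemma translate_apply (x : X) (g : S.compatible) (u : List X) :
    (S.translate x g : List X → K) u = (g : List X → K) (u ++ [x]) := rfl

lemma satisfies_translate : S.Satisfies S.translate := by
  intro x y hxy
  ext g u
  let eval : Module.End K S.compatible →ₗ[K] K :=
    LinearMap.proj u ∘ₗ S.compatible.subtype ∘ₗ LinearMap.applyₗ g
  have hg := g.2 (.mk u [] hxy)
  rw [linearCombination_comp_mapDomain] at hg
  change eval (S.translate x * S.translate y) = eval (linearCombination K _ _)
  rw [apply_linearCombination]
  simpa [eval, translate_apply, Function.comp_def] using hg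

end Reduction

section Presentation

universe u v

variable {X : Type u} {K : Type v} [CommRing K] {A : Type*} [Ring A] [Algebra K A]

/-- The family `z` of elements of `A` is a universal solution of the relations of `S`, that is,
`A` is the algebra presented by them. The target `B` is confined to the universe of
`Module.End K S.compatible`. -/
structure IsUniversal (S : QuadraticRewriting K X) (z : X → A) : Prop where
  satisfies : S.Satisfies z
  exists_lift {B : Type (max u v)} [Ring B] [Algebra K B] {z' : X → B} :
    S.Satisfies z' → ∃ φ : A →ₐ[K] B, ∀ x, φ (z x) = z' x

variable {S : QuadraticRewriting K X} {z : X → A}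

lemma apply_prod_apply (φ : A →ₐ[K] Module.End K S.compatible)
    (hφ : ∀ x, φ (z x) = S.translate x) (g : S.compatible) (w u : List X) :
    (φ (w.map z).prod g : List X → K) u = (g : List X → K) (u ++ w) := by
  induction w generalizing u with
  | nil => simp
  | cons x w ih => simp [hφ, translate_apply, ih]

theorem Confluent.linearIndependent_irreducible (hS : S.Confluent) (hz : S.IsUniversal z) :
    LinearIndependent K fun w : {w : List X // S.Irreducible w} => (w.1.map z).prod := by
  classical
  obtain ⟨φ, hφ⟩ := hz.exists_lift S.satisfies_translate
  let delta (w : List X) : S.compatible := ⟨S.extend (Pi.single w 1), hS.compatible_extend _⟩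
  let coord (w : {w : List X // S.Irreducible w}) : Module.Dual K A :=
    LinearMap.proj [] ∘ₗ S.compatible.subtype ∘ₗ LinearMap.applyₗ (delta w.1) ∘ₗ φ.toLinearMap
  have coord_apply (w w' : {w : List X // S.Irreducible w}) :
      coord w (w'.1.map z).prod = (Pi.single w.1 1 : List X → K) w'.1 := by
    change (φ (w'.1.map z).prod (delta w.1) : List X → K) [] = _
    rw [apply_prod_apply φ hφ, List.nil_append]
    exact extend_of_irreducible _ w'.2
  refine .of_pairwise_dual_eq_zero_one _ coord (fun w w' hne => ?_) fun w => ?_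
  · beta_reduce
    rw [coord_apply, Pi.single_eq_of_ne (Subtype.coe_ne_coe.2 hne.symm)]
  · rw [coord_apply, Pi.single_eq_same]

theorem Confluent.linearIndependent_irreducible_ofFn (hS : S.Confluent) (hz : S.IsUniversal z)
    (N : ℕ) :
    LinearIndependent K fun f : {f : Fin N → X // S.Irreducible (List.ofFn f)} =>
      (List.ofFn fun i => z (f.1 i)).prod := by
  let word (f : {f : Fin N → X // S.Irreducible (List.ofFn f)}) : {w // S.Irreducible w} :=
    ⟨List.ofFn f.1, f.2⟩
  have word_injective : Function.Injective word := fun f f' h =>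
    Subtype.ext (List.ofFn_injective (congrArg Subtype.val h))
  simpa only [Function.comp_def, word, List.map_ofFn] using
    (hS.linearIndependent_irreducible hz).comp word word_injective

theorem Satisfies.span_irreducible_ofFn (hz : S.Satisfies z) (N : ℕ) :
    Submodule.span K (Set.range fun f : {f : Fin N → X // S.Irreducible (List.ofFn f)} =>
        (List.ofFn fun i => z (f.1 i)).prod) =
      Submodule.span K {a | ∃ f : Fin N → X, a = (List.ofFn fun i => z (f i)).prod} := by
  apply le_antisymm <;> rw [Submodule.span_le]
  · rintro _ ⟨f, rfl⟩
    exact Submodule.subset_span ⟨f.1, rfl⟩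
  · rintro _ ⟨f, rfl⟩
    have hmem := hz.prod_mem_span_irreducible (List.ofFn f)
    rw [List.map_ofFn, List.length_ofFn] at hmem
    refine Submodule.span_mono ?_ hmem
    rintro _ ⟨w, hw, rfl, rfl⟩
    exact ⟨⟨w.get, by rwa [List.ofFn_get]⟩, by rw [← List.ofFn_getElem_eq_map]; rfl⟩

end Presentation

end QuadraticRewriting

/-! ### Hecke operators -/

/-- The data of a diagonal-type action of the Hecke algebra of parameter `h = λ - λ⁻¹` on
`I`-indexed tensors: the signs `swap i j` by which the flip of two distinct indices is twisted, and
the eigenvalues `eig i`, roots of `λ² = h λ + 1`, on the diagonal tensors. -/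
structure HeckeDatum {K : Type*} [CommRing K] (h : K) (I : Type*) where
  swap : I → I → K
  swap_comm (i j : I) : swap i j = swap j i
  swap_mul_self (i j : I) : swap i j * swap i j = 1
  eig : I → K
  eig_mul_self (i : I) : eig i * eig i = h * eig i + 1

namespace HeckeDatum

variable {K I J M : Type*} [CommRing K] {h : K} [LinearOrder I] [AddCommGroup M] [Module K M]
variable (D : HeckeDatum h I)

/-- The Hecke operator on `M`-valued functions of two indices. On functions of three indices,
`D.op f` acts on the first two of them and `fun i => D.op (f i)` on the last two. -/
def op (F : I → I → M) (i j : I) : M :=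
  if j < i then D.swap i j • F j i
  else if i < j then D.swap i j • F j i + h • F i j
  else D.eig i • F i i

/-- The coefficient that straightens the index pair `(i, j)` in an eigenvector of the Hecke operator
of eigenvalue `c`; note that `c - h` is the inverse of `c`. -/
def straightenCoeff (c : K) (i j : I) : K := if i = j then 0 else D.swap i j * (c - h)

/-- The index pairs at which the values of an eigenvector of the Hecke operator of eigenvalue `c`
are expressed by other values. -/
def Straightenable (c : K) (i j : I) : Prop := j < i ∨ i = j ∧ D.eig i ≠ c

variable {D}

lemma op_of_gt {i j : I} (hij : j < i) (F : I → I → M) : D.op F i j = D.swap i j • F j i :=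
  if_pos hij

lemma op_of_lt {i j : I} (hij : i < j) (F : I → I → M) :
    D.op F i j = D.swap i j • F j i + h • F i j := by
  rw [op, if_neg hij.not_gt, if_pos hij]

lemma op_self (i : I) (F : I → I → M) : D.op F i i = D.eig i • F i i := by
  rw [op, if_neg (lt_irrefl i), if_neg (lt_irrefl i)]

lemma map_op {N : Type*} [AddCommGroup N] [Module K N] (φ : M →ₗ[K] N) (F : I → I → M) (i j : I) :
    φ (D.op F i j) = D.op (fun a b => φ (F a b)) i j := by
  unfold op
  split_ifs <;> simp

lemma op_apply (f : I → I → J → M) (i j : I) (k : J) :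
    D.op f i j k = D.op (fun a b => f a b k) i j :=
  map_op (LinearMap.proj k : (J → M) →ₗ[K] M) f i j

lemma op_smul (c : K) (F : I → I → M) : D.op (c • F) = c • D.op F := by
  ext i j
  exact (map_op (LinearMap.lsmul K M c) F i j).symm

theorem op_braid (f : I → I → I → M) :
    D.op (fun i => D.op (D.op f i)) = fun i => D.op ((D.op fun i => D.op (f i)) i) := by
  ext i j k
  rcases lt_trichotomy i j with hij | hij | hij <;>
    rcases lt_trichotomy j k with hjk | hjk | hjk <;>
    rcases lt_trichotomy i k with hik | hik | hik <;>
    first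
    | order
    | subst_vars
      simp only [op_apply, op_of_gt, op_of_lt, op_self, *] <;>
      match_scalars <;> grind [D.swap_comm, D.swap_mul_self, D.eig_mul_self]

lemma straightenCoeff_self (c : K) (i : I) : D.straightenCoeff c i i = 0 := if_pos rfl

lemma straightenCoeff_of_gt (c : K) {i j : I} (hij : j < i) :
    D.straightenCoeff c i j = D.swap i j * (c - h) := if_neg hij.ne'

theorem op_eq_smul_iff [IsDomain K] [Module.IsTorsionFree K M] {c : K} (hc : c * c = h * c + 1)
    {F : I → I → M} :
    D.op F = c • F ↔
      ∀ ⦃i j⦄, D.Straightenable c i j → F i j = D.straightenCoeff c i j • F j i := by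
  have hinv : c * (c - h) = 1 := by linear_combination hc
  constructor
  · intro hF i j hij
    have op_apply_eq : D.op F i j = c • F i j := congrFun (congrFun hF i) j
    rcases hij with hij | ⟨rfl, hi⟩
    · rw [op_of_gt hij] at op_apply_eq
      rw [straightenCoeff_of_gt c hij, mul_comm, mul_smul, op_apply_eq, smul_smul, mul_comm, hinv,
        one_smul]
    · rw [op_self, ← sub_eq_zero, ← sub_smul] at op_apply_eq
      rw [straightenCoeff_self, zero_smul]
      exact (smul_eq_zero.1 op_apply_eq).resolve_left (sub_ne_zero.2 hi)
  · intro hF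
    ext i j
    rw [Pi.smul_apply, Pi.smul_apply]
    rcases lt_trichotomy i j with hij | rfl | hij
    · rw [op_of_lt hij, hF (.inl hij), straightenCoeff_of_gt c hij]
      match_scalars
      linear_combination (c - h) * D.swap_mul_self i j - D.swap i j * (c - h) * D.swap_comm i j
    · rw [op_self]
      by_cases hi : D.eig i = c
      · rw [hi]
      · rw [hF (.inr ⟨rfl, hi⟩), straightenCoeff_self, zero_smul, smul_zero, smul_zero]
    · rw [op_of_gt hij, hF (.inl hij), straightenCoeff_of_gt c hij]
      match_scalars
      linear_combination -D.swap i j * hinv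

section Braid

variable {f : I → I → I → M} {c : K}

lemma op_braid_slice_of_op_eq_smul (hf : D.op f = c • f) (i : I) :
    D.op ((D.op fun i => D.op (f i)) i) = c • (D.op fun i => D.op (f i)) i := by
  have op_slice : (fun i => D.op ((c • f) i)) = c • fun i => D.op (f i) :=
    funext fun i => op_smul c (f i)
  rw [← congrFun (op_braid f) i, hf, op_slice, op_smul, Pi.smul_apply]

lemma op_braid_of_forall_op_eq_smul (hf : ∀ i, D.op (f i) = c • f i) :
    D.op (fun i => D.op (D.op f i)) = c • fun i => D.op (D.op f i) := by
  have op_slice : (fun i => D.op (f i)) = c • f := funext hf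
  rw [op_braid, op_slice, op_smul]
  exact funext fun i => op_smul c (D.op f i)

end Braid

/-! ### The exterior rewriting system of two Hecke operators -/

section ExteriorRewriting

open Finsupp

variable [LinearOrder J] [WellFoundedLT I] [WellFoundedLT J]

open Classical in
/-- The rewriting system on the letters `z (i, c)` saying that the Hecke operator on the row indices
agrees with the one on the column indices, the latter for the reversed order of the columns. -/
def exteriorRewriting (D : HeckeDatum h I) (E : HeckeDatum h J) : QuadraticRewriting K (I × J) where
  lt x y := x.2 < y.2 ∨ x.2 = y.2 ∧ x.1 < y.1
  wf := Subrelation.wf (fun hxy => Prod.lex_def.2 hxy)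
    (InvImage.wf Prod.swap ((wellFounded_lt (α := J)).prod_lex (wellFounded_lt (α := I))))
  Reducible x y := y.2 < x.2 ∨ x.2 = y.2 ∧ D.Straightenable (E.eig x.2) x.1 y.1
  rhs x y :=
    if y.2 < x.2 then E.swap x.2 y.2 • D.op (fun a b => single ((a, y.2), (b, x.2)) 1) x.1 y.1
    else D.straightenCoeff (E.eig x.2) x.1 y.1 • single (y, x) 1
  rhs_mem_supported {x y} hxy := by
    split_ifs with hlt
    · refine Submodule.smul_mem _ _ ?_
      have mem (a b : I) : single ((a, y.2), (b, x.2)) (1 : K) ∈ supported K K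
          {p : (I × J) × (I × J) | p.1.2 < x.2 ∨ p.1.2 = x.2 ∧ p.1.1 < x.1} :=
        single_mem_supported _ _ (.inl hlt)
      unfold op
      split_ifs
      · exact Submodule.smul_mem _ _ (mem _ _)
      · exact add_mem (Submodule.smul_mem _ _ (mem _ _)) (Submodule.smul_mem _ _ (mem _ _))
      · exact Submodule.smul_mem _ _ (mem _ _)
    · obtain ⟨hcol, hrow | ⟨hrow, -⟩⟩ := hxy.resolve_left hlt
      · exact Submodule.smul_mem _ _ (single_mem_supported _ _ (.inr ⟨hcol.symm, hrow⟩))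
      · rw [hrow, straightenCoeff_self, zero_smul]
        exact zero_mem _

variable {D : HeckeDatum h I} {E : HeckeDatum h J}

lemma linearCombination_rhs_of_gt {c d : J} (hdc : d < c) (F : (I × J) × (I × J) → M) (i j : I) :
    linearCombination K F ((exteriorRewriting D E).rhs (i, c) (j, d)) =
      E.swap c d • D.op (fun a b => F ((a, d), (b, c))) i j := by
  simp [exteriorRewriting, hdc, map_op]

lemma linearCombination_rhs_self (c : J) (F : (I × J) × (I × J) → M) (i j : I) :
    linearCombination K F ((exteriorRewriting D E).rhs (i, c) (j, c)) =
      D.straightenCoeff (E.eig c) i j • F ((j, c), (i, c)) := by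
  simp [exteriorRewriting]

lemma satisfies_exteriorRewriting_iff {A : Type*} [Ring A] [Algebra K A] {z : I × J → A} :
    (exteriorRewriting D E).Satisfies z ↔
      (∀ ⦃c d⦄, d < c → ∀ i j,
        z (i, c) * z (j, d) = E.swap c d • D.op (fun a b => z (a, d) * z (b, c)) i j) ∧
      ∀ c ⦃i j⦄, D.Straightenable (E.eig c) i j →
        z (i, c) * z (j, c) = D.straightenCoeff (E.eig c) i j • (z (j, c) * z (i, c)) := by
  constructor
  · intro hz
    refine ⟨fun c d hdc i j => ?_, fun c i j hij => ?_⟩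
    · rw [hz (.inl hdc), linearCombination_rhs_of_gt hdc]
    · rw [hz (x := (i, c)) (y := (j, c)) (.inr ⟨rfl, hij⟩), linearCombination_rhs_self]
  · rintro ⟨hgt, hself⟩ ⟨i, c⟩ ⟨j, d⟩ (hdc | ⟨rfl : c = d, hij⟩)
    · rw [hgt hdc, linearCombination_rhs_of_gt hdc]
    · rw [hself c hij, linearCombination_rhs_self]

section Confluence

variable {g : List (I × J) → K} {w : List (I × J)} {c d e : J}

lemma apply_of_column_gt (hg : (exteriorRewriting D E).CompatibleBelow w g) (hdc : d < c) {i j : I}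
    (u v : List (I × J))
    (hlt : List.Shortlex (exteriorRewriting D E).lt (u ++ (i, c) :: (j, d) :: v) w) :
    g (u ++ (i, c) :: (j, d) :: v) =
      E.swap c d • D.op (fun a b => g (u ++ (a, d) :: (b, c) :: v)) i j := by
  rw [hg.apply_append_cons_cons hlt (.inl hdc), linearCombination_rhs_of_gt hdc]

lemma apply_of_column_eq (hg : (exteriorRewriting D E).CompatibleBelow w g) {i j : I}
    (hij : D.Straightenable (E.eig c) i j) (u v : List (I × J))
    (hlt : List.Shortlex (exteriorRewriting D E).lt (u ++ (i, c) :: (j, c) :: v) w) :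
    g (u ++ (i, c) :: (j, c) :: v) =
      D.straightenCoeff (E.eig c) i j • g (u ++ (j, c) :: (i, c) :: v) := by
  rw [hg.apply_append_cons_cons hlt (.inr ⟨rfl, hij⟩), linearCombination_rhs_self]

/-- The values of a function on three-letter words as a function of the rows, the columns of the
letters being `c`, `d` and `e`. -/
def slice (g : List (I × J) → M) (c d e : J) (i j k : I) : M := g [(i, c), (j, d), (k, e)]

lemma slice_of_gt_left (hg : (exteriorRewriting D E).CompatibleBelow w g) (hdc : d < c) {a b : I}
    (hlt : ∀ r, List.Shortlex (exteriorRewriting D E).lt [(a, c), (b, d), (r, e)] w) :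
    slice g c d e a b = E.swap c d • D.op (slice g d c e) a b := by
  ext r
  rw [Pi.smul_apply, op_apply]
  exact apply_of_column_gt hg hdc [] [(r, e)] (hlt r)

lemma slice_of_gt_right (hg : (exteriorRewriting D E).CompatibleBelow w g) (hed : e < d) {a : I}
    (hlt : ∀ b r, List.Shortlex (exteriorRewriting D E).lt [(a, c), (b, d), (r, e)] w) :
    slice g c d e a = E.swap d e • D.op (slice g c e d a) := by
  ext b r
  exact apply_of_column_gt hg hed [(a, c)] [] (hlt b r)

variable {i j k : I}

lemma resolvable_of_gt_of_gt
    (hg : (exteriorRewriting D E).CompatibleBelow [(i, c), (j, d), (k, e)] g)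
    (hdc : d < c) (hed : e < d) :
    E.swap c d • D.op (fun a b => g [(a, d), (b, c), (k, e)]) i j =
      E.swap d e • D.op (fun a b => g [(i, c), (a, e), (b, d)]) j k := by
  have hec := hed.trans hdc
  let f := slice g e d c
  have slice_dec : slice g d e c = E.swap d e • D.op f :=
    funext₂ fun a b => slice_of_gt_left hg hed fun r => .of_lex rfl (.rel (.inl hdc))
  have slice_dce : slice g d c e = E.swap c e • E.swap d e • fun a => D.op (D.op f a) := by
    ext1 a
    rw [slice_of_gt_right hg hec fun b r => .of_lex rfl (.rel (.inl hdc)), slice_dec, Pi.smul_apply,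
      op_smul]
    rfl
  have slice_ecd : slice g e c d = E.swap c d • fun a => D.op (f a) :=
    funext fun a => slice_of_gt_right hg hdc fun b r => .of_lex rfl (.rel (.inl hec))
  have slice_ced : slice g c e d i = E.swap c e • E.swap c d • D.op (fun a => D.op (f a)) i := by
    ext1 a
    rw [slice_of_gt_left hg hec fun r => .of_lex rfl (.cons (.rel (.inl hed))), slice_ecd, op_smul]
    rfl
  calc E.swap c d • D.op (fun a b => g [(a, d), (b, c), (k, e)]) i j
      = E.swap c d • D.op (slice g d c e) i j k := by rw [op_apply]; rfl
    _ = (E.swap c d * E.swap c e * E.swap d e) • D.op (fun a => D.op (D.op f a)) i j k := by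
      rw [slice_dce, op_smul, op_smul]
      simp only [Pi.smul_apply, smul_smul, mul_assoc]
    _ = (E.swap d e * E.swap c e * E.swap c d) • D.op (D.op (fun a => D.op (f a)) i) j k := by
      rw [op_braid, mul_comm, ← mul_assoc, mul_right_comm]
    _ = E.swap d e • D.op (slice g c e d i) j k := by
      rw [slice_ced, op_smul, op_smul]
      simp only [Pi.smul_apply, smul_smul, mul_assoc]

lemma resolvable_of_gt_of_eq [IsDomain K]
    (hg : (exteriorRewriting D E).CompatibleBelow [(i, c), (j, d), (k, d)] g)
    (hdc : d < c) (hjk : D.Straightenable (E.eig d) j k) :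
    E.swap c d • D.op (fun a b => g [(a, d), (b, c), (k, d)]) i j =
      D.straightenCoeff (E.eig d) j k • g [(i, c), (k, d), (j, d)] := by
  let f := slice g d d c
  have op_f : D.op f = E.eig d • f := (op_eq_smul_iff (E.eig_mul_self d)).2 fun a b hab => funext
    fun r => apply_of_column_eq hg hab [] [(r, c)] (.of_lex rfl (.rel (.inl hdc)))
  have slice_dcd : slice g d c d = E.swap c d • fun a => D.op (f a) :=
    funext fun a => slice_of_gt_right hg hdc fun b r => .of_lex rfl (.rel (.inl hdc))
  let F := D.op (fun a => D.op (f a)) i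
  have hF : F j k = D.straightenCoeff (E.eig d) j k • F k j :=
    (op_eq_smul_iff (E.eig_mul_self d)).1 (op_braid_slice_of_op_eq_smul op_f i) hjk
  have lhs : D.op (fun a b => g [(a, d), (b, c), (k, d)]) i j = E.swap c d • F j k := by
    change D.op (fun a b => slice g d c d a b k) i j = _
    rw [← op_apply, slice_dcd, op_smul]
    rfl
  rcases hjk with hkj | ⟨rfl, -⟩
  · have rhs : g [(i, c), (k, d), (j, d)] = E.swap c d • E.swap c d • F k j := by
      change slice g c d d i k j = _
      rw [slice_of_gt_left hg hdc (b := k) fun r => .of_lex rfl (.cons (.rel (.inr ⟨rfl, hkj⟩))),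
        slice_dcd, op_smul]
      rfl
    rw [lhs, rhs, hF, smul_comm (D.straightenCoeff _ _ _), smul_comm (D.straightenCoeff _ _ _)]
  · rw [lhs, hF, straightenCoeff_self, zero_smul, zero_smul, smul_zero, smul_zero]

lemma resolvable_of_eq_of_gt [IsDomain K]
    (hg : (exteriorRewriting D E).CompatibleBelow [(i, c), (j, c), (k, e)] g)
    (hec : e < c) (hij : D.Straightenable (E.eig c) i j) :
    D.straightenCoeff (E.eig c) i j • g [(j, c), (i, c), (k, e)] =
      E.swap c e • D.op (fun a b => g [(i, c), (a, e), (b, c)]) j k := by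
  let f := slice g e c c
  have op_f (r : I) : D.op (f r) = E.eig c • f r :=
    (op_eq_smul_iff (E.eig_mul_self c)).2 fun a b hab =>
      apply_of_column_eq hg hab [(r, e)] [] (.of_lex rfl (.rel (.inl hec)))
  have slice_cec (a : I) (ha : ∀ b r, List.Shortlex (exteriorRewriting D E).lt
      [(a, c), (b, e), (r, c)] [(i, c), (j, c), (k, e)]) :
      slice g c e c a = E.swap c e • D.op f a :=
    funext fun b => slice_of_gt_left hg hec (ha b)
  let F := fun a => D.op (D.op f a)
  have hF : F i j = D.straightenCoeff (E.eig c) i j • F j i :=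
    (op_eq_smul_iff (E.eig_mul_self c)).1 (op_braid_of_forall_op_eq_smul op_f) hij
  have rhs : D.op (fun a b => g [(i, c), (a, e), (b, c)]) j k = E.swap c e • F i j k := by
    change D.op (slice g c e c i) j k = _
    rw [slice_cec i fun b r => .of_lex rfl (.cons (.rel (.inl hec))), op_smul]
    rfl
  rcases hij with hji | ⟨rfl, -⟩
  · have lhs : g [(j, c), (i, c), (k, e)] = E.swap c e • E.swap c e • F j i k := by
      change slice g c c e j i k = _
      rw [slice_of_gt_right hg hec (a := j) fun b r => .of_lex rfl (.rel (.inr ⟨rfl, hji⟩)),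
        slice_cec j fun b r => .of_lex rfl (.rel (.inr ⟨rfl, hji⟩)), op_smul]
      rfl
    rw [lhs, rhs, hF, Pi.smul_apply, smul_comm (D.straightenCoeff _ _ _),
      smul_comm (D.straightenCoeff _ _ _)]
  · rw [rhs, hF, straightenCoeff_self, zero_smul, zero_smul, Pi.zero_apply, smul_zero, smul_zero]

lemma resolvable_of_eq_of_eq
    (hg : (exteriorRewriting D E).CompatibleBelow [(i, c), (j, c), (k, c)] g)
    (hij : D.Straightenable (E.eig c) i j) (hjk : D.Straightenable (E.eig c) j k) :
    D.straightenCoeff (E.eig c) i j • g [(j, c), (i, c), (k, c)] =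
      D.straightenCoeff (E.eig c) j k • g [(i, c), (k, c), (j, c)] := by
  let κ := D.straightenCoeff (E.eig c)
  have hji : j ≤ i := hij.elim le_of_lt fun h => h.1.ge
  have hkj : k ≤ j := hjk.elim le_of_lt fun h => h.1.ge
  have left : κ i j • g [(j, c), (i, c), (k, c)] =
      κ i j • κ i k • κ j k • g [(k, c), (j, c), (i, c)] := by
    rcases hij with hij | ⟨rfl, -⟩
    · congr 1
      exact (apply_of_column_eq hg (.inl (hkj.trans_lt hij)) [(j, c)] []
        (.of_lex rfl (.rel (.inr ⟨rfl, hij⟩)))).trans (congrArg _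
        (apply_of_column_eq hg hjk [] [(i, c)] (.of_lex rfl (.rel (.inr ⟨rfl, hij⟩)))))
    · simp only [κ, straightenCoeff_self, zero_smul]
  have right : κ j k • g [(i, c), (k, c), (j, c)] =
      κ j k • κ i k • κ i j • g [(k, c), (j, c), (i, c)] := by
    rcases hjk with hjk | ⟨rfl, -⟩
    · congr 1
      exact (apply_of_column_eq hg (.inl (hjk.trans_le hji)) [] [(j, c)]
        (.of_lex rfl (.cons (.rel (.inr ⟨rfl, hjk⟩))))).trans (congrArg _
        (apply_of_column_eq hg hij [(k, c)] []
          (.of_lex rfl (.rel (.inr ⟨rfl, hjk.trans_le hji⟩)))))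
    · simp only [κ, straightenCoeff_self, zero_smul]
  rw [left, right, smul_comm (κ j k), smul_comm (κ i j), smul_comm (κ i j)]

theorem confluent_exteriorRewriting [IsDomain K] : (exteriorRewriting D E).Confluent := by
  rintro ⟨i, c⟩ ⟨j, d⟩ ⟨k, e⟩ (hdc | ⟨rfl : c = d, hij⟩) (hed | ⟨rfl : _ = e, hjk⟩) g hg
  · rw [linearCombination_rhs_of_gt hdc, linearCombination_rhs_of_gt hed]
    exact resolvable_of_gt_of_gt hg hdc hed
  · rw [linearCombination_rhs_of_gt hdc, linearCombination_rhs_self]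
    exact resolvable_of_gt_of_eq hg hdc hjk
  · rw [linearCombination_rhs_self, linearCombination_rhs_of_gt hed]
    exact resolvable_of_eq_of_gt hg hed hij
  · rw [linearCombination_rhs_self, linearCombination_rhs_self]
    exact resolvable_of_eq_of_eq hg hij hjk

end Confluence

end ExteriorRewriting

end HeckeDatum

theorem stmt10_general {K I J A : Type*} [CommRing K] [IsDomain K] {h : K}
    [LinearOrder I] [WellFoundedLT I] [LinearOrder J] [WellFoundedLT J] [Ring A] [Algebra K A]
    (D : HeckeDatum h I) (E : HeckeDatum h J) {z : I × J → A}
    (hz : (D.exteriorRewriting E).IsUniversal z) (N : ℕ) :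
    LinearIndependent K
        (fun f : {f : Fin N → I × J // (D.exteriorRewriting E).Irreducible (List.ofFn f)} =>
          (List.ofFn fun i => z (f.1 i)).prod) ∧
      Submodule.span K
          (Set.range
            fun f : {f : Fin N → I × J // (D.exteriorRewriting E).Irreducible (List.ofFn f)} =>
              (List.ofFn fun i => z (f.1 i)).prod) =
        Submodule.span K {x | ∃ f : Fin N → I × J, x = (List.ofFn fun i => z (f i)).prod} :=
  ⟨HeckeDatum.confluent_exteriorRewriting.linearIndependent_irreducible_ofFn hz N,
    hz.satisfies.span_irreducible_ofFn N⟩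

/-! ### The quantum exterior algebra -/

section QuantumExterior

lemma add_smul_eq_zero_iff {K M : Type*} [CommRing K] [AddCommGroup M] [Module K M] {c d : K}
    (hcd : c * d = -1) {x y : M} : x + d • y = 0 ↔ y = c • x := by
  constructor <;> intro h
  · rw [eq_neg_of_add_eq_zero_left h, smul_neg, smul_smul, hcd, neg_one_smul, neg_neg]
  · rw [h, smul_smul, mul_comm, hcd, neg_one_smul, add_neg_cancel]

lemma sgn_comm (t : ℕ) {N : ℕ} (a b : Fin N) : sgn t a b = sgn t b a := by
  simp only [sgn, and_comm]

lemma sgn_mul_self (t : ℕ) {N : ℕ} (a b : Fin N) : sgn t a b * sgn t a b = 1 := by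
  unfold sgn
  split_ifs <;> norm_num

lemma qv_ne_zero : qv ≠ 0 := RatFunc.X_ne_zero

lemma neg_qv_ne_inv_qv : -qv ≠ qv⁻¹ := by
  intro h
  have hdeg := congrArg RatFunc.intDegree h
  rw [RatFunc.intDegree_neg, RatFunc.intDegree_inv, qv, RatFunc.intDegree_X] at hdeg
  norm_num at hdeg

/-- The Hecke operator on the rows of the generators: `-q` and `q⁻¹` are its eigenvalues on the even
and on the odd row indices. -/
def rowDatum (m n : ℕ) : HeckeDatum (qv⁻¹ - qv) (Fin (m + n)) where
  swap a b := -sgn m a b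
  swap_comm a b := by rw [sgn_comm]
  swap_mul_self a b := by rw [neg_mul_neg, sgn_mul_self]
  eig a := if m ≤ (a : ℕ) then qv⁻¹ else -qv
  eig_mul_self a := by split_ifs <;> field_simp [qv_ne_zero] <;> ring

/-- The Hecke operator on the columns of the generators: `q⁻¹` and `-q` are its eigenvalues on the
even and on the odd column indices. -/
def columnDatum (k l : ℕ) : HeckeDatum (qv⁻¹ - qv) (Fin (k + l)) where
  swap := sgn k
  swap_comm := sgn_comm k
  swap_mul_self := sgn_mul_self k
  eig b := if k ≤ (b : ℕ) then -qv else qv⁻¹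
  eig_mul_self b := by split_ifs <;> field_simp [qv_ne_zero] <;> ring

/-- The rewriting system that straightens the words in the generators of `Λ_q`. -/
abbrev qRewriting (m n k l : ℕ) : QuadraticRewriting Kq (Idx m n k l) :=
  (rowDatum m n).exteriorRewriting (columnDatum k l)

variable {m n k l : ℕ}

lemma eig_ne_eig_iff (a : Fin (m + n)) (b : Fin (k + l)) :
    (rowDatum m n).eig a ≠ (columnDatum k l).eig b ↔ (m ≤ (a : ℕ) ↔ k ≤ (b : ℕ)) := by
  simp only [rowDatum, columnDatum]
  split_ifs <;> simp [*, neg_qv_ne_inv_qv, neg_qv_ne_inv_qv.symm]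

section Relators

variable {M : Type*} [AddCommGroup M] [Module Kq M] {a b : Fin (m + n)} {c d : Fin (k + l)}

lemma straightenCoeff_relator_of_even (hab : a < b) (hc : (c : ℕ) < k) {x y : M} :
    x + (sgn m a b * qv⁻¹) • y = 0 ↔
      y = (rowDatum m n).straightenCoeff ((columnDatum k l).eig c) b a • x := by
  apply add_smul_eq_zero_iff
  rw [HeckeDatum.straightenCoeff_of_gt _ hab]
  simp only [rowDatum, columnDatum, if_neg hc.not_ge, sgn_comm m b a]
  linear_combination -(qv * qv⁻¹) * sgn_mul_self m a b - mul_inv_cancel₀ qv_ne_zero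

lemma straightenCoeff_relator_of_odd (hab : a < b) (hc : k ≤ (c : ℕ)) {x y : M} :
    x - (sgn m a b * qv) • y = 0 ↔
      y = (rowDatum m n).straightenCoeff ((columnDatum k l).eig c) b a • x := by
  rw [sub_eq_add_neg, ← neg_smul]
  apply add_smul_eq_zero_iff
  rw [HeckeDatum.straightenCoeff_of_gt _ hab]
  simp only [rowDatum, columnDatum, if_pos hc, sgn_comm m b a]
  linear_combination -(qv * qv⁻¹) * sgn_mul_self m a b - mul_inv_cancel₀ qv_ne_zero

lemma op_relator_self_of_even (ha : (a : ℕ) < m) {F : Fin (m + n) → Fin (m + n) → M} {y : M} :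
    F a a + (sgn k c d * qv⁻¹) • y = 0 ↔
      y = (columnDatum k l).swap d c • (rowDatum m n).op F a a := by
  rw [HeckeDatum.op_self, smul_smul]
  apply add_smul_eq_zero_iff
  simp only [rowDatum, columnDatum, if_neg ha.not_ge, sgn_comm k d c]
  linear_combination -(qv * qv⁻¹) * sgn_mul_self k c d - mul_inv_cancel₀ qv_ne_zero

lemma op_relator_self_of_odd (ha : m ≤ (a : ℕ)) {F : Fin (m + n) → Fin (m + n) → M} {y : M} :
    F a a - (sgn k c d * qv) • y = 0 ↔
      y = (columnDatum k l).swap d c • (rowDatum m n).op F a a := by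
  rw [HeckeDatum.op_self, smul_smul, sub_eq_add_neg, ← neg_smul]
  apply add_smul_eq_zero_iff
  simp only [rowDatum, columnDatum, if_pos ha, sgn_comm k d c]
  linear_combination -(qv * qv⁻¹) * sgn_mul_self k c d - mul_inv_cancel₀ qv_ne_zero

lemma op_relator_of_lt (hab : a < b) {F : Fin (m + n) → Fin (m + n) → M} {y : M} :
    F a b + (sgn m a b * sgn k c d) • y = 0 ↔
      y = (columnDatum k l).swap d c • (rowDatum m n).op F b a := by
  rw [HeckeDatum.op_of_gt hab, smul_smul]
  apply add_smul_eq_zero_iff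
  simp only [rowDatum, columnDatum, sgn_comm k d c, sgn_comm m b a]
  linear_combination -(sgn k c d ^ 2) * sgn_mul_self m a b - sgn_mul_self k c d

lemma op_relator_of_gt (hba : b < a) {F : Fin (m + n) → Fin (m + n) → M} {y : M} :
    F a b + (sgn m a b * sgn k c d) • y - (sgn m a b * (qv⁻¹ - qv)) • F b a = 0 ↔
      y = (columnDatum k l).swap d c • (rowDatum m n).op F b a := by
  have op_apply : (rowDatum m n).op F b a =
      -sgn m a b • (F a b - (sgn m a b * (qv⁻¹ - qv)) • F b a) := by
    rw [HeckeDatum.op_of_lt hba, smul_sub, smul_smul, neg_mul, ← mul_assoc, sgn_mul_self, one_mul,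
      neg_smul (_ - _), sub_neg_eq_add]
    simp only [rowDatum, sgn_comm m b a]
  rw [add_sub_right_comm, op_apply, smul_smul]
  apply add_smul_eq_zero_iff
  simp only [columnDatum, sgn_comm k d c]
  linear_combination -(sgn k c d ^ 2) * sgn_mul_self m a b - sgn_mul_self k c d

end Relators

section Relations

variable {B : Type*} [Ring B] [Algebra Kq B] {φ : FreeAlgebra Kq (Idx m n k l) →ₐ[Kq] B}

lemma satisfies_of_forall_relSet (hφ : ∀ r ∈ relSet m n k l, φ r = 0) :
    (qRewriting m n k l).Satisfies fun p => φ (zgen m n k l p) := by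
  refine HeckeDatum.satisfies_exteriorRewriting_iff.2
    ⟨fun d c hcd b a => ?_, fun c b a hba => ?_⟩
  · rcases lt_trichotomy a b with hab | rfl | hba
    · refine (op_relator_of_lt hab).1 ?_
      simpa using hφ _ (.inr (.inr (.inr (.inl ⟨a, b, c, d, hab, hcd, rfl⟩))))
    · rcases lt_or_ge (a : ℕ) m with ha | ha
      · refine (op_relator_self_of_even ha).1 ?_
        simpa using hφ _ (.inr (.inr (.inl ⟨a, c, d, ha, hcd, rfl⟩)))
      · refine (op_relator_self_of_odd ha).1 ?_
        simpa using hφ _ (.inr (.inr (.inr (.inr (.inr (.inl ⟨a, c, d, ha, hcd, rfl⟩))))))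
    · refine (op_relator_of_gt hba).1 ?_
      simpa using hφ _ (.inr (.inr (.inr (.inr (.inl ⟨a, b, c, d, hba, hcd, rfl⟩)))))
  · rcases hba with hab | ⟨rfl, hne⟩
    · rcases lt_or_ge (c : ℕ) k with hc | hc
      · refine (straightenCoeff_relator_of_even hab hc).1 ?_
        simpa using hφ _ (.inr (.inl ⟨a, b, c, hab, hc, rfl⟩))
      · refine (straightenCoeff_relator_of_odd hab hc).1 ?_
        simpa using hφ _ (.inr (.inr (.inr (.inr (.inr (.inr ⟨a, b, c, hab, hc, rfl⟩))))))
    · rw [← map_mul, hφ _ (.inl ⟨b, c, (eig_ne_eig_iff b c).1 hne, rfl⟩), smul_zero]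

lemma map_eq_zero_of_mem_relSet (hφ : (qRewriting m n k l).Satisfies fun p => φ (zgen m n k l p))
    {r : FreeAlgebra Kq (Idx m n k l)} (hr : r ∈ relSet m n k l) : φ r = 0 := by
  obtain ⟨hgt, hself⟩ := HeckeDatum.satisfies_exteriorRewriting_iff.1 hφ
  rcases hr with ⟨a, b, hab, rfl⟩ | ⟨a, b, c, hab, hc, rfl⟩ | ⟨a, c, d, ha, hcd, rfl⟩ |
    ⟨a, b, c, d, hab, hcd, rfl⟩ | ⟨a, b, c, d, hba, hcd, rfl⟩ | ⟨a, c, d, ha, hcd, rfl⟩ |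
    ⟨a, b, c, hab, hc, rfl⟩
  · rw [map_mul, hself b (.inr ⟨rfl, (eig_ne_eig_iff a b).2 hab⟩), HeckeDatum.straightenCoeff_self,
      zero_smul]
  · simpa using (straightenCoeff_relator_of_even hab hc).2 (hself c (.inl hab))
  · simpa using (op_relator_self_of_even ha).2 (hgt hcd a a)
  · simpa using (op_relator_of_lt hab).2 (hgt hcd b a)
  · simpa using (op_relator_of_gt hba).2 (hgt hcd b a)
  · simpa using (op_relator_self_of_odd ha).2 (hgt hcd a a)
  · simpa using (straightenCoeff_relator_of_odd hab hc).2 (hself c (.inl hab))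

end Relations

theorem isUniversal_qmk_zgen (m n k l : ℕ) :
    (qRewriting m n k l).IsUniversal fun p => qmk m n k l (zgen m n k l p) where
  satisfies := satisfies_of_forall_relSet fun r hr => by
    simpa [qmk] using RingQuot.mkAlgHom_rel Kq (show qrel m n k l r 0 from ⟨hr, rfl⟩)
  exists_lift {B} _ _ z hz := by
    let φ : FreeAlgebra Kq (Idx m n k l) →ₐ[Kq] B := FreeAlgebra.lift Kq z
    have hφ (p : Idx m n k l) : φ (zgen m n k l p) = z p := FreeAlgebra.lift_ι_apply z p
    have map_rel ⦃r s : FreeAlgebra Kq (Idx m n k l)⦄ (hrs : qrel m n k l r s) : φ r = φ s := by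
      rw [hrs.2, map_zero]
      exact map_eq_zero_of_mem_relSet (by simpa only [hφ] using hz) hrs.1
    exact ⟨RingQuot.liftAlgHom Kq ⟨φ, map_rel⟩, fun p =>
      (RingQuot.liftAlgHom_mkAlgHom_apply Kq φ map_rel _).trans (hφ p)⟩

lemma not_reducible_iff (p p' : Idx m n k l) :
    ¬ (qRewriting m n k l).Reducible p p' ↔
      antilexLE m n k l p p' ∧ (p = p' → isOddPair m n k l p) := by
  rcases p with ⟨a, b⟩
  rcases p' with ⟨a', b'⟩
  change ¬ (b' < b ∨ b = b' ∧ (a' < a ∨ a = a' ∧ _ ≠ _)) ↔ _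
  rw [eig_ne_eig_iff]
  simp only [antilexLE, isOddPair, Prod.mk.injEq]
  grind

instance : IsTrans (Idx m n k l) (antilexLE m n k l) where
  trans p p' p'' h h' := by
    unfold antilexLE at *
    grind

lemma forall_antilexLE_iff {N : ℕ} {f : Fin N → Idx m n k l} :
    (∀ i j, i ≤ j → antilexLE m n k l (f i) (f j)) ↔
      ∀ i (hi : i + 1 < N), antilexLE m n k l (f ⟨i, Nat.lt_of_succ_lt hi⟩) (f ⟨i + 1, hi⟩) := by
  rw [← List.isChain_ofFn, List.isChain_iff_pairwise, List.pairwise_ofFn]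
  refine ⟨fun hf i j hij => hf i j hij.le, fun hf i j hij => ?_⟩
  rcases hij.lt_or_eq with hij | rfl
  · exact hf hij
  · exact .inr ⟨rfl, le_rfl⟩

theorem admissible_eq (m n k l N : ℕ) :
    admissible m n k l N = fun f => (qRewriting m n k l).Irreducible (List.ofFn f) := by
  ext f
  rw [QuadraticRewriting.irreducible_iff_isChain, List.isChain_ofFn]
  simp only [not_reducible_iff, forall_and, ← forall_antilexLE_iff]
  refine and_congr_right' ⟨fun hf i hi => hf _ _ rfl, ?_⟩
  rintro hf ⟨i, -⟩ ⟨_, hj⟩ rfl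
  exact hf i hj

end QuantumExterior

/-- Lemma 4.5 of the paper: the images in `A` of the monomials
`z_{a₁b₁}·z_{a₂b₂}⋯z_{a_N b_N}` indexed by admissible sequences form a `K`-basis of the
degree-`N` piece `A_N`. -/
theorem stmt10 (m n k l N : ℕ) (hmn : 1 ≤ m + n) (hkl : 1 ≤ k + l) :
    LinearIndependent Kq
        (fun f : {f : Fin N → Idx m n k l // admissible m n k l N f} =>
          qmonomial m n k l N f.val) ∧
      Submodule.span Kq
          (Set.range fun f : {f : Fin N → Idx m n k l // admissible m n k l N f} =>
            qmonomial m n k l N f.val) =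
        qdeg m n k l N := by
  rw [admissible_eq]
  exact stmt10_general _ _ (isUniversal_qmk_zgen m n k l) N
end
end
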